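/- arXiv:2405.08753 — 6 statements merged into one kernel-verified Lean document; each statement's English description precedes it below -/
import Mathlib

section
/- Let (Γ_k)_{k≥1} be positive reals such that λ_c := lim_{k→∞} Γ_k^{−1/k} exists in (0,∞), and fix ρ ∈ (0,∞). Consider the functional J₀(p) := I(p) + (ρ − Σ_{k≥1} k p_k)·log λ_c on the set 𝒳_ρ := {p ∈ [0,∞)^ℕ : Σ_{k≥1} k p_k ≤ ρ}. Then: (a) if ρ ≤ ρ_c, there exists a unique c(ρ) ∈ [0,∞) with Σ_{k≥1} λ_c^k Γ_k e^{−c(ρ)k} = ρ, and the unique minimizer p* of J₀ on 𝒳_ρ is given by p*_k = (1/k)·λ_c^k Γ_k e^{−c(ρ)k} for every k, which satisfies Σ_{k≥1} k p*_k = ρ; (b) if ρ > ρ_c (in particular ρ_c < ∞), the unique minimizer of J₀ on 𝒳_ρ is p*_k = (1/k)·λ_c^k Γ_k, which satisfies Σ_{k≥1} k p*_k = ρ_c. -/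
/-!
Put `a_k = λ_c^k Γ_k`. The root-type limit says `log Γ_k / k → -log λ_c`, so the generating series
`f(c) = Σ a_k e^{-ck}` converges for every `c > 0` (`summable_weight`), and the same growth bound makes
the series defining `I(q)` converge for every `q` with `Σ k q_k < ∞` (`summable_entropy`).

The minimization rests on an exact identity. With `P_k = a_k e^{-ck} / k` and
`klFun x = x log x + 1 - x`, whenever `Σ k P_k < ∞`,
`J₀(q) = Σ P_k klFun(q_k / P_k) - Σ P_k - c Σ k q_k + ρ log λ_c` (`J0_eq`).
Since `klFun ≥ 0` with equality only at `1`, and `c (Σ k P_k - Σ k q_k) ≥ 0` both when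
`Σ k P_k = ρ` and when `c = 0`, the sequence `P` is the unique minimizer (`pstar_minimizer`).

The multiplier `c(ρ)` comes from the intermediate value theorem applied to `f`, which is continuous
on `[δ, ∞)` for every `δ > 0`, tends to `0` at infinity, and exceeds any `ρ < ρ_c` near `0`
because some partial sum of `ρ_c` already does; for `ρ = ρ_c` one takes `c = 0`.
-/

open scoped BigOperators ENNReal
open Filter

/-- The entropy functional `I(p) = Σ_{k≥1} p_k log(p_k k/(Γ_k e))`. -/
noncomputable def Ifun (Γ : ℕ → ℝ) (p : ℕ → ℝ) : ℝ :=
  ∑' k : ℕ, p (k + 1) * Real.log (p (k + 1) * ((k : ℝ) + 1) / (Γ (k + 1) * Real.exp 1))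

/-- The functional `J₀(p) = I(p) + (ρ − Σ_{k≥1} k p_k) log λ_c`. -/
noncomputable def J0 (Γ : ℕ → ℝ) (lc ρ : ℝ) (p : ℕ → ℝ) : ℝ :=
  Ifun Γ p + (ρ - ∑' k : ℕ, ((k : ℝ) + 1) * p (k + 1)) * Real.log lc

/-- The set `𝒳_ρ = {p ∈ [0,∞)^ℕ : Σ_{k≥1} k p_k ≤ ρ}`. -/
def Xrho (ρ : ℝ) : Set (ℕ → ℝ) :=
  {p | (∀ k, 0 ≤ p k) ∧ Summable (fun k : ℕ => ((k : ℝ) + 1) * p (k + 1)) ∧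
    ∑' k : ℕ, ((k : ℝ) + 1) * p (k + 1) ≤ ρ}

/-- The critical density `ρ_c = Σ_{k≥1} λ_c^k Γ_k ∈ [0,∞]`. -/
noncomputable def rhoc (Γ : ℕ → ℝ) (lc : ℝ) : ℝ≥0∞ :=
  ∑' k : ℕ, ENNReal.ofReal (lc ^ (k + 1) * Γ (k + 1))

/-- The candidate minimizer `p*_k = (1/k) λ_c^k Γ_k e^{−ck}` (which vanishes at `k = 0`). -/
noncomputable def pstar (Γ : ℕ → ℝ) (lc c : ℝ) (k : ℕ) : ℝ :=
  (1 / (k : ℝ)) * lc ^ k * Γ k * Real.exp (-c * (k : ℝ))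

theorem tendsto_log_weight (Γ : ℕ → ℝ) (hΓ : ∀ k, 1 ≤ k → 0 < Γ k) (lc : ℝ) (hlc : 0 < lc)
    (hlim : Tendsto (fun k : ℕ => (Γ k) ^ (-(1 : ℝ) / (k : ℝ))) atTop (nhds lc)) :
    Tendsto (fun k : ℕ => Real.log (Γ (k + 1)) / ((k : ℝ) + 1)) atTop (nhds (-Real.log lc)) := by
  have h1 := ((hlim.log hlc.ne').comp (tendsto_add_atTop_nat 1)).neg
  refine h1.congr fun k => ?_
  simp only [Function.comp]
  rw [Real.log_rpow (hΓ _ (by omega))]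
  push_cast
  ring

/-- The root test for `Σ λ_c^k Γ_k e^{-ck}`: its terms are eventually below `e^{-ck/2}`. -/
theorem summable_weight (Γ : ℕ → ℝ) (hΓ : ∀ k, 1 ≤ k → 0 < Γ k) (lc : ℝ) (hlc : 0 < lc)
    (hlim : Tendsto (fun k : ℕ => (Γ k) ^ (-(1 : ℝ) / (k : ℝ))) atTop (nhds lc))
    (c : ℝ) (hc : 0 < c) :
    Summable (fun k : ℕ => lc ^ (k + 1) * Γ (k + 1) * Real.exp (-c * ((k : ℝ) + 1))) := by
  have h1 := tendsto_log_weight Γ hΓ lc hlc hlim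
  have h2 : ∀ᶠ k : ℕ in atTop, Real.log (Γ (k + 1)) / ((k : ℝ) + 1) < -Real.log lc + c / 2 :=
    h1.eventually_lt_const (by linarith)
  have hs : Summable (fun k : ℕ => Real.exp (k * (-(c / 2)))) :=
    Real.summable_exp_nat_mul_iff.2 (by linarith)
  refine Summable.of_norm_bounded_eventually_nat hs ?_
  filter_upwards [h2] with k hk
  have hG := hΓ (k + 1) (by omega)
  have hK : (0 : ℝ) < (k : ℝ) + 1 := by positivity
  rw [div_lt_iff₀ hK] at hk
  rw [Real.norm_of_nonneg (by positivity)]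
  have e1 : lc ^ (k + 1) = Real.exp (((k : ℝ) + 1) * Real.log lc) := by
    have := Real.exp_nat_mul (Real.log lc) (k + 1)
    rw [Real.exp_log hlc] at this
    rw [← this]; push_cast; rfl
  have e2 : Γ (k + 1) = Real.exp (Real.log (Γ (k + 1))) := (Real.exp_log hG).symm
  rw [e1, e2, ← Real.exp_add, ← Real.exp_add, Real.exp_le_exp]
  nlinarith

/-- Absolute convergence of `I(p)`. The factor `log (k / (Γ_k e))` is `O(k)`, and `p_k log p_k` is
squeezed between `-(k p_k + e^{1-k})` and `S p_k`, where `S = Σ j p_j`. -/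
theorem summable_entropy (Γ : ℕ → ℝ) (hΓ : ∀ k, 1 ≤ k → 0 < Γ k) (lc : ℝ) (hlc : 0 < lc)
    (hlim : Tendsto (fun k : ℕ => (Γ k) ^ (-(1 : ℝ) / (k : ℝ))) atTop (nhds lc))
    (p : ℕ → ℝ) (hp : ∀ k, 0 ≤ p k) (hs : Summable (fun k : ℕ => ((k : ℝ) + 1) * p (k + 1))) :
    Summable (fun k : ℕ =>
      p (k + 1) * Real.log (p (k + 1) * ((k : ℝ) + 1) / (Γ (k + 1) * Real.exp 1))) := by
  obtain ⟨C, hC⟩ := (tendsto_log_weight Γ hΓ lc hlc hlim).abs.bddAbove_range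
  have hC' : ∀ k : ℕ, |Real.log (Γ (k + 1))| ≤ C * ((k : ℝ) + 1) := by
    intro k
    have hK : (0 : ℝ) < (k : ℝ) + 1 := by positivity
    have := hC ⟨k, rfl⟩
    simp only [abs_div, abs_of_pos hK] at this
    rwa [div_le_iff₀ hK] at this
  set S := ∑' k : ℕ, ((k : ℝ) + 1) * p (k + 1) with hS
  have hS0 : 0 ≤ S := tsum_nonneg fun k => mul_nonneg (by positivity) (hp _)
  have hexp : Summable (fun k : ℕ => Real.exp (k * (-1))) :=
    Real.summable_exp_nat_mul_iff.2 (by norm_num)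
  refine Summable.of_norm_bounded ((hs.mul_left (S + C + 3)).add hexp) fun k => ?_
  have hG := hΓ (k + 1) (by omega)
  have hK : (0 : ℝ) < (k : ℝ) + 1 := by positivity
  have hpS : ((k : ℝ) + 1) * p (k + 1) ≤ S :=
    hs.le_tsum k fun j _ => mul_nonneg (by positivity) (hp _)
  have hGk := abs_le.1 (hC' k)
  rcases (hp (k + 1)).eq_or_lt with h0 | h0
  · simp [← h0, Real.exp_nonneg]
  have hlogK : Real.log ((k : ℝ) + 1) ≤ (k : ℝ) := by
    have := Real.log_le_sub_one_of_pos hK; linarith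
  have hlogK0 : 0 ≤ Real.log ((k : ℝ) + 1) :=
    Real.log_nonneg (by have : (0 : ℝ) ≤ k := by positivity
                        linarith)
  have hexpand : Real.log (p (k + 1) * ((k : ℝ) + 1) / (Γ (k + 1) * Real.exp 1))
      = Real.log (p (k + 1)) + Real.log ((k : ℝ) + 1) - Real.log (Γ (k + 1)) - 1 := by
    rw [Real.log_div (by positivity) (by positivity), Real.log_mul h0.ne' hK.ne',
      Real.log_mul hG.ne' (Real.exp_ne_zero _), Real.log_exp]
    ring
  have hup : Real.log (p (k + 1)) ≤ S := by
    have := Real.log_le_sub_one_of_pos h0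
    have hk0 : (0 : ℝ) ≤ (k : ℝ) := by positivity
    nlinarith [mul_nonneg hk0 h0.le]
  -- The inequality `log x ≤ x - 1` at `x = e^{-k} / p_{k+1}`.
  have hlow : -(p (k + 1) * Real.log (p (k + 1))) ≤ Real.exp (k * (-1)) + k * p (k + 1) := by
    have h := Real.log_le_sub_one_of_pos (div_pos (Real.exp_pos ((k : ℝ) * (-1))) h0)
    rw [Real.log_div (Real.exp_ne_zero _) h0.ne', Real.log_exp] at h
    have h' := mul_le_mul_of_nonneg_left h h0.le
    have e : p (k + 1) * (Real.exp ((k : ℝ) * (-1)) / p (k + 1) - 1)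
        = Real.exp ((k : ℝ) * (-1)) - p (k + 1) := by
      field_simp
    rw [e] at h'
    linarith
  have hE := Real.exp_pos ((k : ℝ) * (-1))
  have hk0 : (0 : ℝ) ≤ (k : ℝ) := by positivity
  have m1 := mul_le_mul_of_nonneg_left hup h0.le
  have m2 := mul_le_mul_of_nonneg_left hlogK h0.le
  have m3 := mul_nonneg h0.le hlogK0
  have m4 := mul_le_mul_of_nonneg_left hGk.1 h0.le
  have m5 := mul_le_mul_of_nonneg_left hGk.2 h0.le
  have m6 := mul_nonneg hk0 h0.le
  have m7 := mul_nonneg (mul_nonneg hk0 h0.le) hS0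
  rw [hexpand, Real.norm_eq_abs, abs_le]
  constructor <;> nlinarith [mul_nonneg h0.le hS0]

theorem mul_pstar_succ (Γ : ℕ → ℝ) (lc c : ℝ) (k : ℕ) :
    ((k : ℝ) + 1) * pstar Γ lc c (k + 1)
      = lc ^ (k + 1) * Γ (k + 1) * Real.exp (-c * ((k : ℝ) + 1)) := by
  unfold pstar
  have hK : ((k : ℝ) + 1) ≠ 0 := by positivity
  push_cast
  field_simp

theorem pstar_succ_pos (Γ : ℕ → ℝ) (hΓ : ∀ k, 1 ≤ k → 0 < Γ k) (lc c : ℝ) (hlc : 0 < lc) (k : ℕ) :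
    0 < pstar Γ lc c (k + 1) := by
  have hG := hΓ (k + 1) (by omega)
  unfold pstar
  positivity

/-- At `k = 0` the value is `0` because of the factor `1 / 0`, whatever the sign of `Γ 0`. -/
theorem pstar_nonneg (Γ : ℕ → ℝ) (hΓ : ∀ k, 1 ≤ k → 0 < Γ k) (lc c : ℝ) (hlc : 0 < lc) (k : ℕ) :
    0 ≤ pstar Γ lc c k := by
  cases k with
  | zero => simp [pstar]
  | succ k => exact (pstar_succ_pos Γ hΓ lc c hlc k).le

/-- The summands of `I(q)` rewritten as relative entropies with respect to `pstar`. -/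
theorem entropy_term_eq (Γ : ℕ → ℝ) (hΓ : ∀ k, 1 ≤ k → 0 < Γ k) (lc c : ℝ) (hlc : 0 < lc)
    (k : ℕ) (x : ℝ) (hx : 0 ≤ x) :
    x * Real.log (x * ((k : ℝ) + 1) / (Γ (k + 1) * Real.exp 1))
      = pstar Γ lc c (k + 1) * InformationTheory.klFun (x / pstar Γ lc c (k + 1))
        - pstar Γ lc c (k + 1) + (Real.log lc - c) * (((k : ℝ) + 1) * x) := by
  have hP := pstar_succ_pos Γ hΓ lc c hlc k
  have hm := mul_pstar_succ Γ lc c k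
  have hG := hΓ (k + 1) (by omega)
  have hK : (0 : ℝ) < (k : ℝ) + 1 := by positivity
  set P := pstar Γ lc c (k + 1)
  rcases hx.eq_or_lt with h0 | h0
  · simp [← h0, InformationTheory.klFun_zero]
  have hlogP : Real.log ((k : ℝ) + 1) + Real.log P
      = ((k : ℝ) + 1) * Real.log lc + Real.log (Γ (k + 1)) - c * ((k : ℝ) + 1) := by
    rw [← Real.log_mul hK.ne' hP.ne', hm, Real.log_mul (by positivity) (Real.exp_ne_zero _),
      Real.log_mul (by positivity) hG.ne', Real.log_exp, Real.log_pow]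
    push_cast
    ring
  rw [InformationTheory.klFun_apply, Real.log_div (by positivity) (by positivity),
    Real.log_mul h0.ne' hK.ne', Real.log_mul hG.ne' (Real.exp_ne_zero _), Real.log_exp,
    Real.log_div h0.ne' hP.ne']
  have e : P * (x / P * (Real.log x - Real.log P) + 1 - x / P)
      = x * (Real.log x - Real.log P) + P - x := by
    field_simp
  rw [e, show Real.log P = ((k : ℝ) + 1) * Real.log lc + Real.log (Γ (k + 1))
    - c * ((k : ℝ) + 1) - Real.log ((k : ℝ) + 1) by linarith]
  ring

theorem summable_pstar (Γ : ℕ → ℝ) (hΓ : ∀ k, 1 ≤ k → 0 < Γ k) (lc c : ℝ) (hlc : 0 < lc)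
    (hP : Summable (fun k : ℕ => ((k : ℝ) + 1) * pstar Γ lc c (k + 1))) :
    Summable (fun k : ℕ => pstar Γ lc c (k + 1)) := by
  refine Summable.of_nonneg_of_le (fun k => (pstar_succ_pos Γ hΓ lc c hlc k).le) (fun k => ?_) hP
  have h := pstar_succ_pos Γ hΓ lc c hlc k
  have hk0 : (0 : ℝ) ≤ (k : ℝ) := by positivity
  nlinarith [mul_nonneg hk0 h.le]

/-- `J₀(q)` as the relative entropy of `q` with respect to `pstar`, plus terms that depend on `q`
only through `Σ k q_k`. -/
theorem J0_eq (Γ : ℕ → ℝ) (hΓ : ∀ k, 1 ≤ k → 0 < Γ k) (lc c : ℝ) (hlc : 0 < lc)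
    (hlim : Tendsto (fun k : ℕ => (Γ k) ^ (-(1 : ℝ) / (k : ℝ))) atTop (nhds lc)) (ρ : ℝ)
    (hP : Summable (fun k : ℕ => ((k : ℝ) + 1) * pstar Γ lc c (k + 1)))
    (q : ℕ → ℝ) (hq : ∀ k, 0 ≤ q k) (hs : Summable (fun k : ℕ => ((k : ℝ) + 1) * q (k + 1))) :
    Summable (fun k : ℕ => pstar Γ lc c (k + 1)
        * InformationTheory.klFun (q (k + 1) / pstar Γ lc c (k + 1))) ∧
    J0 Γ lc ρ q = ∑' k : ℕ, pstar Γ lc c (k + 1)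
        * InformationTheory.klFun (q (k + 1) / pstar Γ lc c (k + 1))
      - ∑' k : ℕ, pstar Γ lc c (k + 1) - c * ∑' k : ℕ, ((k : ℝ) + 1) * q (k + 1)
      + ρ * Real.log lc := by
  have hI := summable_entropy Γ hΓ lc hlc hlim q hq hs
  have hP1 := summable_pstar Γ hΓ lc c hlc hP
  have hL := hs.mul_left (Real.log lc - c)
  have hD : Summable (fun k : ℕ => pstar Γ lc c (k + 1)
        * InformationTheory.klFun (q (k + 1) / pstar Γ lc c (k + 1))) := by
    refine ((hI.add hP1).sub hL).congr fun k => ?_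
    rw [entropy_term_eq Γ hΓ lc c hlc k _ (hq _)]
    ring
  refine ⟨hD, ?_⟩
  unfold J0 Ifun
  rw [tsum_congr fun k => entropy_term_eq Γ hΓ lc c hlc k _ (hq (k + 1)),
    (hD.sub hP1).tsum_add hL, hD.tsum_sub hP1, tsum_mul_left]
  ring

/-- `pstar` minimizes `J₀` uniquely on `𝒳_ρ` as soon as it lies in `𝒳_ρ` and complementary slackness
holds: the mass constraint is saturated or the multiplier `c` vanishes. -/
theorem pstar_minimizer (Γ : ℕ → ℝ) (hΓ : ∀ k, 1 ≤ k → 0 < Γ k) (lc c : ℝ) (hlc : 0 < lc)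
    (hlim : Tendsto (fun k : ℕ => (Γ k) ^ (-(1 : ℝ) / (k : ℝ))) atTop (nhds lc)) (ρ : ℝ)
    (hc : 0 ≤ c) (hX : pstar Γ lc c ∈ Xrho ρ)
    (hcs : c = 0 ∨ ∑' k : ℕ, ((k : ℝ) + 1) * pstar Γ lc c (k + 1) = ρ) :
    (∀ q ∈ Xrho ρ, J0 Γ lc ρ (pstar Γ lc c) ≤ J0 Γ lc ρ q) ∧
    (∀ q ∈ Xrho ρ, (∀ r ∈ Xrho ρ, J0 Γ lc ρ q ≤ J0 Γ lc ρ r) →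
      ∀ k, 1 ≤ k → q k = pstar Γ lc c k) := by
  have hPs := hX.2.1
  have hpos := pstar_succ_pos Γ hΓ lc c hlc
  have hJP := (J0_eq Γ hΓ lc c hlc hlim ρ hPs _ hX.1 hPs).2
  simp only [div_self (hpos _).ne', InformationTheory.klFun_one, mul_zero, tsum_zero] at hJP
  have hD0 : ∀ q ∈ Xrho ρ, ∀ k : ℕ, 0 ≤ pstar Γ lc c (k + 1)
        * InformationTheory.klFun (q (k + 1) / pstar Γ lc c (k + 1)) := fun q hq k =>
    mul_nonneg (hpos k).le (InformationTheory.klFun_nonneg (div_nonneg (hq.1 _) (hpos k).le))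
  have key : ∀ q ∈ Xrho ρ, J0 Γ lc ρ (pstar Γ lc c) + ∑' k : ℕ, pstar Γ lc c (k + 1)
        * InformationTheory.klFun (q (k + 1) / pstar Γ lc c (k + 1)) ≤ J0 Γ lc ρ q := by
    intro q hq
    rw [(J0_eq Γ hΓ lc c hlc hlim ρ hPs q hq.1 hq.2.1).2, hJP]
    have hle := hq.2.2
    rcases hcs with h | h
    · subst h; linarith
    · rw [h]; nlinarith
  refine ⟨fun q hq => ?_, fun q hq hmin k hk => ?_⟩
  · exact (le_add_of_nonneg_right (tsum_nonneg (hD0 q hq))).trans (key q hq)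
  · obtain ⟨j, rfl⟩ : ∃ j, k = j + 1 := ⟨k - 1, by omega⟩
    have h1 := key q hq
    have h2 := hmin _ hX
    have h3 := (J0_eq Γ hΓ lc c hlc hlim ρ hPs q hq.1 hq.2.1).1.le_tsum j
      fun i _ => hD0 q hq i
    have h4 := hD0 q hq j
    have h5 : pstar Γ lc c (j + 1)
        * InformationTheory.klFun (q (j + 1) / pstar Γ lc c (j + 1)) = 0 := by linarith
    have h6 := (mul_eq_zero.1 h5).resolve_left (hpos j).ne'
    rw [InformationTheory.klFun_eq_zero_iff (div_nonneg (hq.1 _) (hpos j).le)] at h6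
    exact (div_eq_one_iff_eq (hpos j).ne').1 h6

/-- Strict monotonicity in `c` of `Σ a_k e^{-ck}` wherever it converges. -/
theorem tsum_weight_lt (a : ℕ → ℝ) (ha : ∀ k, 0 < a k) (c d : ℝ) (hcd : c < d)
    (hs : Summable (fun k : ℕ => a k * Real.exp (-c * ((k : ℝ) + 1)))) :
    ∑' k : ℕ, a k * Real.exp (-d * ((k : ℝ) + 1))
      < ∑' k : ℕ, a k * Real.exp (-c * ((k : ℝ) + 1)) := by
  have hlt : ∀ k : ℕ, a k * Real.exp (-d * ((k : ℝ) + 1)) < a k * Real.exp (-c * ((k : ℝ) + 1)) := by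
    intro k
    have hK : (0 : ℝ) < (k : ℝ) + 1 := by positivity
    exact mul_lt_mul_of_pos_left (Real.exp_lt_exp.2 (by nlinarith)) (ha k)
  exact Summable.tsum_lt_tsum_of_nonneg (i := 0)
    (fun k => mul_nonneg (ha k).le (Real.exp_nonneg _)) (fun k => (hlt k).le) (hlt 0) hs

/-- The equation `Σ a_k e^{-ck} = ρ` has a solution `c ≥ 0` for `0 < ρ ≤ Σ a_k`. -/
theorem exists_multiplier (a : ℕ → ℝ) (ha : ∀ k, 0 < a k)
    (hs : ∀ c : ℝ, 0 < c → Summable (fun k : ℕ => a k * Real.exp (-c * ((k : ℝ) + 1))))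
    (ρ : ℝ) (hρ : 0 < ρ) (hle : ENNReal.ofReal ρ ≤ ∑' k : ℕ, ENNReal.ofReal (a k)) :
    ∃ c : ℝ, 0 ≤ c ∧ ∑' k : ℕ, a k * Real.exp (-c * ((k : ℝ) + 1)) = ρ := by
  rcases hle.eq_or_lt with heq | hlt
  · refine ⟨0, le_rfl, ?_⟩
    have h := congrArg ENNReal.toReal heq
    rw [ENNReal.toReal_ofReal hρ.le, ENNReal.tsum_toReal_eq fun _ => ENNReal.ofReal_ne_top] at h
    rw [h]
    exact tsum_congr fun k => by simp [ENNReal.toReal_ofReal (ha k).le]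
  -- A partial sum already exceeds `ρ` at `c = 0`, hence also at some `δ > 0`.
  obtain ⟨s, hsum⟩ : ∃ s : Finset ℕ, ρ < ∑ k ∈ s, a k := by
    rw [ENNReal.tsum_eq_iSup_sum, lt_iSup_iff] at hlt
    obtain ⟨s, h⟩ := hlt
    rw [← ENNReal.ofReal_sum_of_nonneg fun k _ => (ha k).le] at h
    exact ⟨s, (ENNReal.ofReal_lt_ofReal_iff_of_nonneg hρ.le).1 h⟩
  obtain ⟨δ, hδ, hδs⟩ : ∃ δ : ℝ, 0 < δ ∧
      ρ < ∑ k ∈ s, a k * Real.exp (-δ * ((k : ℝ) + 1)) := by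
    have hcont : Continuous fun c : ℝ => ∑ k ∈ s, a k * Real.exp (-c * ((k : ℝ) + 1)) := by
      fun_prop
    have hev : ∀ᶠ c : ℝ in nhds 0, ρ < ∑ k ∈ s, a k * Real.exp (-c * ((k : ℝ) + 1)) :=
      hcont.continuousAt.eventually_const_lt (by simpa using hsum)
    have hev' := (hev.filter_mono (nhdsWithin_le_nhds (s := Set.Ioi 0))).and self_mem_nhdsWithin
    obtain ⟨δ, h1, h2⟩ := hev'.exists
    exact ⟨δ, h2, h1⟩
  set f : ℝ → ℝ := fun c => ∑' k : ℕ, a k * Real.exp (-c * ((k : ℝ) + 1)) with hf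
  have hterm0 : ∀ (c : ℝ) (k : ℕ), 0 ≤ a k * Real.exp (-c * ((k : ℝ) + 1)) := fun c k =>
    mul_nonneg (ha k).le (Real.exp_nonneg _)
  have hfδ : ρ < f δ := hδs.trans_le ((hs δ hδ).sum_le_tsum s fun k _ => hterm0 δ k)
  have hcontf : ContinuousOn f (Set.Ici δ) := by
    refine continuousOn_tsum (u := fun k : ℕ => a k * Real.exp (-δ * ((k : ℝ) + 1)))
      (fun k => by fun_prop) (hs δ hδ) fun k c hc => ?_
    have hK : (0 : ℝ) < (k : ℝ) + 1 := by positivity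
    have hc' : δ ≤ c := hc
    rw [Real.norm_of_nonneg (hterm0 c k)]
    exact mul_le_mul_of_nonneg_left (Real.exp_le_exp.2 (by nlinarith)) (ha k).le
  -- `f (δ + t) ≤ e^{-t} f δ`, because every exponent `k` is at least `1`.
  have hdecay : ∀ t : ℝ, 0 ≤ t → f (δ + t) ≤ Real.exp (-t) * f δ := by
    intro t ht
    simp only [hf]
    rw [← tsum_mul_left]
    refine (hs _ (by linarith)).tsum_le_tsum (fun k => ?_) ((hs δ hδ).mul_left _)
    rw [mul_left_comm, ← Real.exp_add]
    refine mul_le_mul_of_nonneg_left (Real.exp_le_exp.2 ?_) (ha k).le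
    have hk : (0 : ℝ) ≤ (k : ℝ) := by positivity
    nlinarith [mul_nonneg ht hk]
  have hfpos : 0 < f δ := hρ.trans hfδ
  set t := Real.log (f δ / ρ) with ht
  have ht0 : 0 ≤ t := Real.log_nonneg ((one_le_div hρ).2 hfδ.le)
  have hft : f (δ + t) ≤ ρ := by
    refine (hdecay t ht0).trans_eq ?_
    rw [Real.exp_neg, ht, Real.exp_log (div_pos hfpos hρ)]
    field_simp
  obtain ⟨c, hc, hfc⟩ := intermediate_value_Icc' (show δ ≤ δ + t by linarith)
    (hcontf.mono Set.Icc_subset_Ici_self) ⟨hft, hfδ.le⟩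
  exact ⟨c, hδ.le.trans hc.1, hfc⟩

theorem stmt0 (Γ : ℕ → ℝ) (hΓ : ∀ k, 1 ≤ k → 0 < Γ k) (lc : ℝ) (hlc : 0 < lc)
    (hlim : Tendsto (fun k : ℕ => (Γ k) ^ (-(1 : ℝ) / (k : ℝ))) atTop (nhds lc))
    (ρ : ℝ) (hρ : 0 < ρ) :
    -- (a) the case ρ ≤ ρ_c
    (ENNReal.ofReal ρ ≤ rhoc Γ lc →
      (∃! c : ℝ, 0 ≤ c ∧
        ∑' k : ℕ, lc ^ (k + 1) * Γ (k + 1) * Real.exp (-c * ((k : ℝ) + 1)) = ρ) ∧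
      (∀ c : ℝ, 0 ≤ c →
        (∑' k : ℕ, lc ^ (k + 1) * Γ (k + 1) * Real.exp (-c * ((k : ℝ) + 1)) = ρ) →
        pstar Γ lc c ∈ Xrho ρ ∧
        (∑' k : ℕ, ((k : ℝ) + 1) * pstar Γ lc c (k + 1)) = ρ ∧
        (∀ q ∈ Xrho ρ, J0 Γ lc ρ (pstar Γ lc c) ≤ J0 Γ lc ρ q) ∧
        (∀ q ∈ Xrho ρ, (∀ r ∈ Xrho ρ, J0 Γ lc ρ q ≤ J0 Γ lc ρ r) →
          ∀ k, 1 ≤ k → q k = pstar Γ lc c k))) ∧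
    -- (b) the case ρ > ρ_c
    (rhoc Γ lc < ENNReal.ofReal ρ →
      pstar Γ lc 0 ∈ Xrho ρ ∧
      (∑' k : ℕ, ((k : ℝ) + 1) * pstar Γ lc 0 (k + 1)) = (rhoc Γ lc).toReal ∧
      (∀ q ∈ Xrho ρ, J0 Γ lc ρ (pstar Γ lc 0) ≤ J0 Γ lc ρ q) ∧
      (∀ q ∈ Xrho ρ, (∀ r ∈ Xrho ρ, J0 Γ lc ρ q ≤ J0 Γ lc ρ r) →
        ∀ k, 1 ≤ k → q k = pstar Γ lc 0 k)) := by
  have ha : ∀ k : ℕ, 0 < lc ^ (k + 1) * Γ (k + 1) := fun k =>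
    mul_pos (pow_pos hlc _) (hΓ _ (by omega))
  have hsum := summable_weight Γ hΓ lc hlc hlim
  refine ⟨fun hle => ⟨?_, fun c hc hcρ => ?_⟩, fun hlt => ?_⟩
  · obtain ⟨c, hc, hcρ⟩ := exists_multiplier _ ha hsum ρ hρ hle
    -- A divergent series has `tsum` equal to `0`, which `ρ > 0` excludes.
    have hS : ∀ d : ℝ,
        ∑' k : ℕ, lc ^ (k + 1) * Γ (k + 1) * Real.exp (-d * ((k : ℝ) + 1)) = ρ →
        Summable (fun k : ℕ => lc ^ (k + 1) * Γ (k + 1) * Real.exp (-d * ((k : ℝ) + 1))) := by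
      intro d hd
      by_contra hns
      rw [tsum_eq_zero_of_not_summable hns] at hd
      exact hρ.ne hd
    refine ⟨c, ⟨hc, hcρ⟩, ?_⟩
    rintro d ⟨-, hdρ⟩
    rcases lt_trichotomy d c with h | h | h
    · have := tsum_weight_lt _ ha d c h (hS d hdρ)
      linarith
    · exact h
    · have := tsum_weight_lt _ ha c d h (hS c hcρ)
      linarith
  · have hmass : ∑' k : ℕ, ((k : ℝ) + 1) * pstar Γ lc c (k + 1) = ρ := by
      rw [tsum_congr (mul_pstar_succ Γ lc c), hcρ]
    have hPs : Summable (fun k : ℕ => ((k : ℝ) + 1) * pstar Γ lc c (k + 1)) := by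
      by_contra hns
      rw [tsum_eq_zero_of_not_summable hns] at hmass
      exact hρ.ne hmass
    have hX : pstar Γ lc c ∈ Xrho ρ := ⟨pstar_nonneg Γ hΓ lc c hlc, hPs, hmass.le⟩
    exact ⟨hX, hmass, pstar_minimizer Γ hΓ lc c hlc hlim ρ hc hX (Or.inr hmass)⟩
  · have hterm : ∀ k : ℕ, (ENNReal.ofReal (lc ^ (k + 1) * Γ (k + 1))).toReal
        = ((k : ℝ) + 1) * pstar Γ lc 0 (k + 1) := by
      intro k
      rw [mul_pstar_succ, ENNReal.toReal_ofReal (ha k).le]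
      simp
    have hmass : ∑' k : ℕ, ((k : ℝ) + 1) * pstar Γ lc 0 (k + 1) = (rhoc Γ lc).toReal := by
      unfold rhoc
      rw [ENNReal.tsum_toReal_eq fun _ => ENNReal.ofReal_ne_top]
      exact (tsum_congr hterm).symm
    have hPs : Summable (fun k : ℕ => ((k : ℝ) + 1) * pstar Γ lc 0 (k + 1)) :=
      (ENNReal.summable_toReal (ne_top_of_lt hlt)).congr hterm
    have hX : pstar Γ lc 0 ∈ Xrho ρ := by
      refine ⟨pstar_nonneg Γ hΓ lc 0 hlc, hPs, ?_⟩
      rw [hmass]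
      exact ENNReal.toReal_le_of_le_ofReal hρ.le hlt.le
    exact ⟨hX, hmass, pstar_minimizer Γ hΓ lc 0 hlc hlim ρ le_rfl hX (Or.inl rfl)⟩
end

section
/- Let (Γ_k)_{k≥1} be positive reals such that λ_c := lim_{k→∞} Γ_k^{−1/k} exists in (0,∞), and fix ρ ∈ (0,∞). Then the infimum of I(p) + (ρ − Σ_{k≥1} k p_k)·log λ_c over all p ∈ [0,∞)^ℕ with Σ_{k≥1} k p_k ≤ ρ equals: ρ·log λ_c − (ρ·c(ρ) + Σ_{k≥1} (1/k)·Γ_k λ_c^k e^{−c(ρ)k}) if ρ ≤ ρ_c, where c(ρ) ∈ [0,∞) is the unique number with Σ_{k≥1} λ_c^k Γ_k e^{−c(ρ)k} = ρ; and it equals ρ·log λ_c − Σ_{k≥1} (1/k)·Γ_k λ_c^k if ρ > ρ_c. -/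
/-!
Put `q_k = Γ_k λ_c^k e^{-ck} / k`, so that `Γ_k = k q_k λ_c^{-k} e^{ck}`. Each summand of `I(p)` then splits as
`p_k log (p_k k / (Γ_k e)) = (p_k log (p_k / q_k) - p_k + q_k) - q_k + (log λ_c - c) k p_k`,
and the bracket is nonnegative, vanishing exactly when `p_k = q_k` (`entropy_term_ge`,
`entropy_term_min`). Summing, for every admissible `p`,
`J₀(p) ≥ ρ log λ_c - Σ q_k - c Σ k p_k ≥ ρ log λ_c - Σ q_k - c ρ`,
with equality at `p = q` as soon as `q` is admissible and `c (ρ - Σ k q_k) = 0`. Both cases of the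
theorem are instances of this complementary slackness condition (`sInf_J0`): either
`Σ k q_k = ρ`, or `c = 0` and `Σ k q_k = ρ_c < ρ`.

Summing the pointwise bound needs the series `I(p)` to converge, since otherwise `∑'` is the junk
value `0`. The summands are bounded below by a summable sequence, as above, and they are bounded
above by a multiple of `k p_k` because `-log Γ_k = O(k)` (`neg_log_le`, `entropy_term_le`).
-/

open scoped BigOperators ENNReal
open Filter

/-- Convergence of `Γ_k^{-1/k}` forces `-log Γ_k` to grow at most linearly. -/
lemma neg_log_le (Γ : ℕ → ℝ) (hΓ : ∀ k, 1 ≤ k → 0 < Γ k) (lc : ℝ)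
    (hlim : Tendsto (fun k : ℕ => (Γ k) ^ (-(1 : ℝ) / (k : ℝ))) atTop (nhds lc)) :
    ∃ D : ℝ, 0 ≤ D ∧ ∀ k : ℕ, -Real.log (Γ (k + 1)) ≤ D * ((k : ℝ) + 1) := by
  obtain ⟨B, hB⟩ := hlim.bddAbove_range
  refine ⟨|B|, abs_nonneg _, fun k => ?_⟩
  have hg := hΓ (k + 1) (by omega)
  have hk : (0 : ℝ) < (k : ℝ) + 1 := by positivity
  have h1 : (Γ (k + 1)) ^ (-(1 : ℝ) / ((k + 1 : ℕ) : ℝ)) ≤ B := hB ⟨k + 1, rfl⟩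
  have h2 : 0 < (Γ (k + 1)) ^ (-(1 : ℝ) / ((k + 1 : ℕ) : ℝ)) := Real.rpow_pos_of_pos hg _
  have h3 := Real.log_le_sub_one_of_pos h2
  rw [Real.log_rpow hg] at h3
  push_cast at h3 h1
  have h4 : -1 / ((k : ℝ) + 1) * Real.log (Γ (k + 1)) ≤ |B| := by
    linarith [le_abs_self B]
  have h5 : -1 / ((k : ℝ) + 1) * Real.log (Γ (k + 1)) = -Real.log (Γ (k + 1)) / ((k : ℝ) + 1) := by
    ring
  rw [h5, div_le_iff₀ hk] at h4
  exact h4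

/-- The pointwise entropy inequality `p log (p / q) ≥ p - q`, for `q = g l^n e^{-cn} / n` and with
`log (p / q)` expressed through `g`. -/
lemma entropy_term_ge {p g l c n : ℝ} (hp : 0 ≤ p) (hg : 0 < g) (hn : 0 < n) :
    -(1 / n * g * Real.exp (n * l) * Real.exp (-c * n)) + (l - c) * (n * p)
      ≤ p * Real.log (p * n / (g * Real.exp 1)) := by
  rcases hp.eq_or_lt with rfl | hp
  · have : 0 < 1 / n * g * Real.exp (n * l) * Real.exp (-c * n) := by positivity
    simp only [zero_mul, mul_zero, add_zero]
    linarith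
  · set q := 1 / n * g * Real.exp (n * l) * Real.exp (-c * n) with hq
    have hq0 : 0 < q := by positivity
    have h1 := Real.log_le_sub_one_of_pos (div_pos hq0 hp)
    have h2 : Real.log (q / p) = -Real.log n + Real.log g + n * l - c * n - Real.log p := by
      rw [Real.log_div hq0.ne' hp.ne', hq, Real.log_mul (by positivity) (by positivity),
        Real.log_mul (by positivity) (by positivity), Real.log_mul (by positivity) (by positivity),
        Real.log_exp, Real.log_exp, one_div, Real.log_inv]
      ring
    have h3 : Real.log (p * n / (g * Real.exp 1))
        = Real.log p + Real.log n - Real.log g - 1 := by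
      rw [Real.log_div (by positivity) (by positivity), Real.log_mul (by positivity) (by positivity),
        Real.log_mul (by positivity) (by positivity), Real.log_exp]
      ring
    have h4 := mul_le_mul_of_nonneg_left h1 hp.le
    have h5 : p * (q / p - 1) = q - p := by field_simp
    rw [h5, h2] at h4
    rw [h3]
    nlinarith

/-- Equality in `entropy_term_ge` at `p = q`. -/
lemma entropy_term_min {g l c n : ℝ} (hg : 0 < g) (hn : 0 < n) :
    let q := 1 / n * g * Real.exp (n * l) * Real.exp (-c * n)
    q * Real.log (q * n / (g * Real.exp 1)) = -q + (l - c) * (n * q) := by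
  intro q
  have h : q * n / (g * Real.exp 1) = Real.exp (n * l - c * n - 1) := by
    rw [show n * l - c * n - 1 = n * l + -c * n - 1 by ring, Real.exp_sub, Real.exp_add]
    simp only [q]
    field_simp
  rw [h, Real.log_exp]
  ring

/-- Upper bound on a summand of `I(p)` by a multiple of `k p_k`, used only for convergence. -/
lemma entropy_term_le {p g n D R : ℝ} (hp : 0 ≤ p) (hg : 0 < g) (hn : 1 ≤ n) (hR : 0 ≤ R)
    (hpR : n * p ≤ R) (hD : -Real.log g ≤ D * n) :
    p * Real.log (p * n / (g * Real.exp 1)) ≤ (R + D) * (n * p) := by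
  rcases hp.eq_or_lt with rfl | hp
  · simp
  have hn0 : 0 < n := by linarith
  have h3 : Real.log (p * n / (g * Real.exp 1))
      = Real.log (n * p) - Real.log g - 1 := by
    rw [Real.log_div (by positivity) (by positivity), mul_comm p n,
      Real.log_mul hg.ne' (by positivity), Real.log_exp]
    ring
  have h1 := Real.log_le_sub_one_of_pos (mul_pos hn0 hp)
  have h4 : Real.log (p * n / (g * Real.exp 1)) ≤ (R + D) * n := by
    rw [h3]
    nlinarith
  calc _ ≤ p * ((R + D) * n) := mul_le_mul_of_nonneg_left h4 hp.le
    _ = _ := by ring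

/-- The common form of both cases: if `q` is admissible and complementary slackness
`c (ρ - Σ k q_k) = 0` holds, then `q` is a minimizer. -/
lemma sInf_J0 (Γ : ℕ → ℝ) (hΓ : ∀ k, 1 ≤ k → 0 < Γ k) (lc : ℝ) (hlc : 0 < lc)
    (hlim : Tendsto (fun k : ℕ => (Γ k) ^ (-(1 : ℝ) / (k : ℝ))) atTop (nhds lc))
    (ρ : ℝ) (hρ : 0 < ρ) (c : ℝ) (hc : 0 ≤ c)
    (hs : Summable fun k : ℕ => lc ^ (k + 1) * Γ (k + 1) * Real.exp (-c * ((k : ℝ) + 1)))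
    (hle : ∑' k : ℕ, lc ^ (k + 1) * Γ (k + 1) * Real.exp (-c * ((k : ℝ) + 1)) ≤ ρ)
    (hcs : c * (ρ - ∑' k : ℕ, lc ^ (k + 1) * Γ (k + 1) * Real.exp (-c * ((k : ℝ) + 1))) = 0) :
    sInf ((fun p => J0 Γ lc ρ p) '' Xrho ρ) =
      ρ * Real.log lc -
        (ρ * c + ∑' k : ℕ, (1 / ((k : ℝ) + 1)) * Γ (k + 1) * lc ^ (k + 1) *
          Real.exp (-c * ((k : ℝ) + 1))) := by
  have hpow : ∀ k : ℕ, lc ^ (k + 1) = Real.exp (((k : ℝ) + 1) * Real.log lc) := by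
    intro k
    rw [mul_comm, Real.exp_mul, Real.exp_log hlc]
    exact_mod_cast (Real.rpow_natCast lc (k + 1)).symm
  have hn : ∀ k : ℕ, (0 : ℝ) < (k : ℝ) + 1 := fun k => by positivity
  have hn1 : ∀ k : ℕ, (1 : ℝ) ≤ (k : ℝ) + 1 := fun k => by simp
  have hg : ∀ k : ℕ, 0 < Γ (k + 1) := fun k => hΓ _ (by omega)
  let Q : ℕ → ℝ := fun k => (1 / ((k : ℝ) + 1)) * Γ (k + 1) * lc ^ (k + 1) *
    Real.exp (-c * ((k : ℝ) + 1))
  have hQ0 : ∀ k, 0 ≤ Q k := fun k => by have := hg k; positivity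
  have hnQ : (fun k : ℕ => ((k : ℝ) + 1) * Q k) =
      fun k : ℕ => lc ^ (k + 1) * Γ (k + 1) * Real.exp (-c * ((k : ℝ) + 1)) := by
    funext k
    have := hn k
    simp only [Q]
    field_simp
  rw [← hnQ] at hs hle hcs
  have hQs : Summable Q := by
    refine Summable.of_nonneg_of_le hQ0 (fun k => ?_) hs
    nlinarith [hQ0 k, hn1 k]
  obtain ⟨D, hD0, hD⟩ := neg_log_le Γ hΓ lc hlim
  apply IsLeast.csInf_eq
  constructor
  · -- Index `0` enters none of the sums; the value `0` there keeps the sequence nonnegative.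
    refine ⟨fun k => if k = 0 then 0 else Q (k - 1), ⟨fun k => ?_, ?_, ?_⟩, ?_⟩
    · dsimp only
      split_ifs
      exacts [le_rfl, hQ0 _]
    · simpa using hs
    · simpa using hle
    · have h : ∀ k : ℕ, Q k * Real.log (Q k * ((k : ℝ) + 1) / (Γ (k + 1) * Real.exp 1)) =
          -Q k + (Real.log lc - c) * (((k : ℝ) + 1) * Q k) := by
        intro k
        have := entropy_term_min (l := Real.log lc) (c := c) (hg k) (hn k)
        simp only [← hpow] at this
        exact this
      simp only [J0, Ifun, Nat.succ_ne_zero, if_false, Nat.add_sub_cancel]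
      simp only [h]
      rw [hQs.neg.tsum_add (hs.mul_left _), tsum_neg, tsum_mul_left]
      change _ = ρ * Real.log lc - (ρ * c + ∑' k, Q k)
      linear_combination hcs
  · rintro _ ⟨p, ⟨hp0, hps, hpρ⟩, rfl⟩
    have hlow : ∀ k : ℕ, -Q k + (Real.log lc - c) * (((k : ℝ) + 1) * p (k + 1)) ≤
        p (k + 1) * Real.log (p (k + 1) * ((k : ℝ) + 1) / (Γ (k + 1) * Real.exp 1)) := by
      intro k
      have := entropy_term_ge (l := Real.log lc) (c := c) (hp0 (k + 1)) (hg k) (hn k)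
      simp only [← hpow] at this
      exact this
    have hup : ∀ k : ℕ,
        p (k + 1) * Real.log (p (k + 1) * ((k : ℝ) + 1) / (Γ (k + 1) * Real.exp 1)) ≤
          (ρ + D) * (((k : ℝ) + 1) * p (k + 1)) := by
      intro k
      refine entropy_term_le (hp0 _) (hg k) (hn1 k) hρ.le (le_trans ?_ hpρ) (hD k)
      exact hps.le_tsum k fun j _ => mul_nonneg (hn j).le (hp0 _)
    have hls := hQs.neg.add (hps.mul_left (Real.log lc - c))
    have hIs : Summable fun k : ℕ =>
        p (k + 1) * Real.log (p (k + 1) * ((k : ℝ) + 1) / (Γ (k + 1) * Real.exp 1)) := by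
      have h := Summable.of_nonneg_of_le (fun k => sub_nonneg.2 (hlow k))
        (fun k => sub_le_sub_right (hup k) _) ((hps.mul_left (ρ + D)).sub hls)
      simpa using h.add hls
    have hI := hls.tsum_le_tsum hlow hIs
    rw [hQs.neg.tsum_add (hps.mul_left _), tsum_neg, tsum_mul_left] at hI
    have hcp := mul_le_mul_of_nonneg_left hpρ hc
    change ρ * Real.log lc - (ρ * c + ∑' k, Q k) ≤ J0 Γ lc ρ p
    simp only [J0, Ifun]
    linarith

theorem stmt1 (Γ : ℕ → ℝ) (hΓ : ∀ k, 1 ≤ k → 0 < Γ k) (lc : ℝ) (hlc : 0 < lc)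
    (hlim : Tendsto (fun k : ℕ => (Γ k) ^ (-(1 : ℝ) / (k : ℝ))) atTop (nhds lc))
    (ρ : ℝ) (hρ : 0 < ρ) :
    -- the case ρ ≤ ρ_c
    (ENNReal.ofReal ρ ≤ rhoc Γ lc →
      ∀ c : ℝ, 0 ≤ c →
        (∑' k : ℕ, lc ^ (k + 1) * Γ (k + 1) * Real.exp (-c * ((k : ℝ) + 1)) = ρ) →
        sInf ((fun p => J0 Γ lc ρ p) '' Xrho ρ) =
          ρ * Real.log lc -
            (ρ * c + ∑' k : ℕ, (1 / ((k : ℝ) + 1)) * Γ (k + 1) * lc ^ (k + 1) *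
              Real.exp (-c * ((k : ℝ) + 1)))) ∧
    -- the case ρ > ρ_c
    (rhoc Γ lc < ENNReal.ofReal ρ →
      sInf ((fun p => J0 Γ lc ρ p) '' Xrho ρ) =
        ρ * Real.log lc - ∑' k : ℕ, (1 / ((k : ℝ) + 1)) * Γ (k + 1) * lc ^ (k + 1)) := by
  constructor
  · intro _ c hc hsum
    refine sInf_J0 Γ hΓ lc hlc hlim ρ hρ c hc ?_ hsum.le (by rw [hsum]; ring)
    -- A non-summable family would have `∑' = 0`, contradicting `0 < ρ`.
    by_contra h
    rw [tsum_eq_zero_of_not_summable h] at hsum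
    exact hρ.ne hsum
  · intro h
    have h0 : ∀ k : ℕ, 0 ≤ lc ^ (k + 1) * Γ (k + 1) := fun k =>
      mul_nonneg (pow_nonneg hlc.le _) (hΓ _ (by omega)).le
    have hs : Summable fun k : ℕ => lc ^ (k + 1) * Γ (k + 1) := by
      have h1 := ENNReal.summable_toReal h.ne_top
      simpa only [ENNReal.toReal_ofReal (h0 _)] using h1
    rw [rhoc, ← ENNReal.ofReal_tsum_of_nonneg h0 hs] at h
    have hle := (ENNReal.ofReal_lt_ofReal_iff hρ).1 h
    have := sInf_J0 Γ hΓ lc hlc hlim ρ hρ 0 le_rfl (by simpa using hs) (by simpa using hle.le)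
      (by simp)
    simpa using this
end

section
/- Let N ≥ 2, let ℓ be a lace on {1,…,N} and let g be an irreducible graph on {1,…,N} with ℓ ⊆ g. Then lace(g) = ℓ if and only if every edge (i,j) ∈ g∖ℓ satisfies lace(ℓ ∪ {(i,j)}) = ℓ. -/
/-!
The sequences `jseq` and `iseq` are built from maxima and minima over the edges of a graph. So
inclusion of graphs gives inequalities between them, and a strict inequality is always caused by
a single edge.

Two facts carry the proof. First, a lace satisfies `laceOf N l = l`: the set `laceOf N l ⊆ l` is
already irreducible, so by minimality nothing of `l` is left over (`laceOf_lace`). Second, if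
`l ⊆ g` and `laceOf N g ⊆ l`, then `l` and `g` have the same sequences up to termination
(`agree_of_laceOf_subset`), because every edge selected in `g` is available in `l`.

If `laceOf N g = l`, then `insert e l` lies between `l` and `g`, whose sequences agree, so by
monotonicity it has the same sequences too. Conversely, suppose the sequences of `g` differ from
those of `l`. At the first difference some edge `e ∈ g` beats all edges of `l`, and the
sequences of `insert e l` already differ from those of `l`.
-/

/-- `g` is a graph on `{1,…,N}`: each edge `(i,j)` satisfies `1 ≤ i < j ≤ N`. -/
def IsGraph (N : ℕ) (g : Finset (ℕ × ℕ)) : Prop :=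
  ∀ e ∈ g, 1 ≤ e.1 ∧ e.1 < e.2 ∧ e.2 ≤ N

/-- `g` is irreducible: no `k ∈ {1,…,N−1}` is a breakpoint, i.e. for every such `k`
there is an edge `(i,j) ∈ g` with `i ≤ k < j`. -/
def IsIrred (N : ℕ) (g : Finset (ℕ × ℕ)) : Prop :=
  ∀ k, 1 ≤ k → k < N → ∃ e ∈ g, e.1 ≤ k ∧ k < e.2

/-- A lace: an irreducible graph which is no longer irreducible after removing any edge. -/
def IsLace (N : ℕ) (l : Finset (ℕ × ℕ)) : Prop :=
  IsGraph N l ∧ IsIrred N l ∧ ∀ e ∈ l, ¬ IsIrred N (l.erase e)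

/-- The sequence `j₁, j₂, …` of right endpoints in the construction of `lace(g)`:
`j₁ = max{j : (1,j) ∈ g}` and `j_{m+1} = max{j : j > j_m, (i,j) ∈ g for some i ≤ j_m}`. -/
def jseq (g : Finset (ℕ × ℕ)) : ℕ → ℕ
  | 0 => (g.filter (fun e => e.1 = 1)).sup Prod.snd
  | m + 1 => (g.filter (fun e => e.1 ≤ jseq g m ∧ jseq g m < e.2)).sup Prod.snd

/-- The sequence `i₁, i₂, …` of left endpoints: `i₁ = 1` and
`i_{m+1} = min{i : (i, j_{m+1}) ∈ g}`. -/
noncomputable def iseq (g : Finset (ℕ × ℕ)) : ℕ → ℕ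
  | 0 => 1
  | m + 1 => sInf {i | (i, jseq g (m + 1)) ∈ g}

/-- The lace `lace(g)` of an irreducible graph `g` on `{1,…,N}`: the edges
`(i₁,j₁), …, (i_n,j_n)` where `n` is the first index with `j_n = N`. -/
noncomputable def laceOf (N : ℕ) (g : Finset (ℕ × ℕ)) : Set (ℕ × ℕ) :=
  {e | ∃ m : ℕ, (∀ m' < m, jseq g m' ≠ N) ∧ e = (iseq g m, jseq g m)}

/-- The index `m` is reached by the construction of `laceOf N g`: no earlier right endpoint
equals `N`. -/
def Reached (N : ℕ) (g : Finset (ℕ × ℕ)) (m : ℕ) : Prop :=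
  ∀ m' < m, jseq g m' ≠ N

/-- The endpoint sequences of `h` coincide with those of `g` at every index reached by `g`. -/
def Agree (N : ℕ) (g h : Finset (ℕ × ℕ)) : Prop :=
  ∀ m, Reached N g m → jseq h m = jseq g m ∧ iseq h m = iseq g m

lemma Reached.mono {N : ℕ} {g : Finset (ℕ × ℕ)} {m n : ℕ} (h : Reached N g n) (hmn : m ≤ n) :
    Reached N g m :=
  fun m' hm' => h m' (hm'.trans_le hmn)

lemma le_jseq_zero {g : Finset (ℕ × ℕ)} {e : ℕ × ℕ} (he : e ∈ g) (h1 : e.1 = 1) :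
    e.2 ≤ jseq g 0 := by
  rw [jseq]
  exact Finset.le_sup (f := Prod.snd) (Finset.mem_filter.2 ⟨he, h1⟩)

lemma le_jseq_succ {g : Finset (ℕ × ℕ)} {e : ℕ × ℕ} {m : ℕ} (he : e ∈ g)
    (h1 : e.1 ≤ jseq g m) (h2 : jseq g m < e.2) : e.2 ≤ jseq g (m + 1) := by
  rw [jseq]
  exact Finset.le_sup (f := Prod.snd) (Finset.mem_filter.2 ⟨he, h1, h2⟩)

lemma exists_jseq_zero {N : ℕ} (hN : 2 ≤ N) {g : Finset (ℕ × ℕ)} (hg : IsGraph N g)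
    (hi : IsIrred N g) : (1, jseq g 0) ∈ g := by
  obtain ⟨e, he, h1, h2⟩ := hi 1 le_rfl (by omega)
  have hne : (g.filter (fun e => e.1 = 1)).Nonempty :=
    ⟨e, Finset.mem_filter.2 ⟨he, le_antisymm h1 (hg e he).1⟩⟩
  obtain ⟨f, hf, hfe⟩ := Finset.exists_mem_eq_sup _ hne Prod.snd
  rw [Finset.mem_filter] at hf
  rw [jseq, hfe, ← hf.2]
  exact hf.1

lemma exists_jseq_succ {N : ℕ} {g : Finset (ℕ × ℕ)} (hi : IsIrred N g) {m : ℕ}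
    (h1 : 1 ≤ jseq g m) (h2 : jseq g m < N) :
    ∃ e ∈ g, e.1 ≤ jseq g m ∧ jseq g m < e.2 ∧ e.2 = jseq g (m + 1) := by
  obtain ⟨e, he, h3, h4⟩ := hi _ h1 h2
  have hne : (g.filter (fun e => e.1 ≤ jseq g m ∧ jseq g m < e.2)).Nonempty :=
    ⟨e, Finset.mem_filter.2 ⟨he, h3, h4⟩⟩
  obtain ⟨f, hf, hfe⟩ := Finset.exists_mem_eq_sup _ hne Prod.snd
  rw [Finset.mem_filter] at hf
  exact ⟨f, hf.1, hf.2.1, hf.2.2, by rw [jseq, hfe]⟩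

lemma edge_mem {N : ℕ} (hN : 2 ≤ N) {g : Finset (ℕ × ℕ)} (hg : IsGraph N g)
    (hi : IsIrred N g) : ∀ m, Reached N g m → (iseq g m, jseq g m) ∈ g := by
  intro m
  induction m with
  | zero => intro _; exact exists_jseq_zero hN hg hi
  | succ m ih =>
    intro hm
    have h := hg _ (ih (hm.mono m.le_succ))
    have hne := hm m m.lt_succ_self
    obtain ⟨e, he, -, -, h3⟩ := exists_jseq_succ hi (m := m)
      (by simp only at h; omega) (by simp only at h; omega)
    have : ({i | (i, jseq g (m + 1)) ∈ g} : Set ℕ).Nonempty := ⟨e.1, by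
      rw [← h3]; exact he⟩
    exact Nat.sInf_mem this

lemma step_lt {N : ℕ} (hN : 2 ≤ N) {g : Finset (ℕ × ℕ)} (hg : IsGraph N g)
    (hi : IsIrred N g) {m : ℕ} (hm : Reached N g (m + 1)) :
    iseq g (m + 1) ≤ jseq g m ∧ jseq g m < jseq g (m + 1) := by
  have h := hg _ (edge_mem hN hg hi m (hm.mono m.le_succ))
  have hne := hm m m.lt_succ_self
  obtain ⟨e, he, h1, h2, h3⟩ := exists_jseq_succ hi (m := m)
    (by simp only at h; omega) (by simp only at h; omega)
  refine ⟨le_trans (Nat.sInf_le ?_) h1, h3 ▸ h2⟩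
  rw [Set.mem_ofPred_eq, ← h3]
  exact he

lemma laceOf_subset {N : ℕ} (hN : 2 ≤ N) {g : Finset (ℕ × ℕ)} (hg : IsGraph N g)
    (hi : IsIrred N g) : laceOf N g ⊆ (g : Set (ℕ × ℕ)) := by
  rintro e ⟨m, hm, rfl⟩
  exact edge_mem hN hg hi m hm

/-- `laceOf N g` has no breakpoint: consecutive selected edges overlap until `N` is reached. -/
lemma laceOf_cover {N : ℕ} (hN : 2 ≤ N) {g : Finset (ℕ × ℕ)} (hg : IsGraph N g)
    (hi : IsIrred N g) (k : ℕ) (hk : 1 ≤ k) (hkN : k < N) :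
    ∃ m, Reached N g m ∧ iseq g m ≤ k ∧ k < jseq g m := by
  induction k, hk using Nat.le_induction with
  | base =>
    exact ⟨0, fun _ h => absurd h (Nat.not_lt_zero _), le_rfl,
      (hg _ (exists_jseq_zero hN hg hi)).2.1⟩
  | succ k hk ih =>
    obtain ⟨m, hm, h1, h2⟩ := ih (by omega)
    by_cases hlt : k + 1 < jseq g m
    · exact ⟨m, hm, by omega, hlt⟩
    · have hm' : Reached N g (m + 1) := by
        intro m' hm'
        rcases Nat.lt_succ_iff_lt_or_eq.1 hm' with h | rfl
        · exact hm m' h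
        · omega
      have := step_lt hN hg hi hm'
      exact ⟨m + 1, hm', by omega, by omega⟩

/-- A lace is its own lace. -/
lemma laceOf_lace {N : ℕ} (hN : 2 ≤ N) {l : Finset (ℕ × ℕ)} (hl : IsLace N l) :
    laceOf N l = (l : Set (ℕ × ℕ)) := by
  obtain ⟨hg, hi, hmin⟩ := hl
  refine Set.Subset.antisymm (laceOf_subset hN hg hi) fun e he => ?_
  by_contra hne
  refine hmin e he fun k hk hkN => ?_
  obtain ⟨m, hm, h1, h2⟩ := laceOf_cover hN hg hi k hk hkN
  refine ⟨(iseq l m, jseq l m), Finset.mem_erase.2 ⟨?_, edge_mem hN hg hi m hm⟩, h1, h2⟩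
  rintro rfl
  exact hne ⟨m, hm, rfl⟩

lemma Agree.reached_iff {N : ℕ} {g h : Finset (ℕ × ℕ)} (H : Agree N g h) (m : ℕ) :
    Reached N h m ↔ Reached N g m := by
  constructor
  · induction m with
    | zero => intro _ m' hm'; omega
    | succ m ih =>
      intro hm m' hm'
      have hg := ih (hm.mono m.le_succ)
      rw [← (H m' (hg.mono (Nat.lt_succ_iff.1 hm'))).1]
      exact hm m' hm'
  · intro hm m' hm'
    rw [(H m' (hm.mono hm'.le)).1]
    exact hm m' hm'

lemma Agree.symm {N : ℕ} {g h : Finset (ℕ × ℕ)} (H : Agree N g h) : Agree N h g := by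
  intro m hm
  have := H m ((H.reached_iff m).1 hm)
  exact ⟨this.1.symm, this.2.symm⟩

lemma Agree.laceOf_eq {N : ℕ} {g h : Finset (ℕ × ℕ)} (H : Agree N g h) :
    laceOf N h = laceOf N g := by
  ext e
  constructor
  · rintro ⟨m, hm, rfl⟩
    have hm' := (H.reached_iff m).1 hm
    exact ⟨m, hm', by rw [(H m hm').1, (H m hm').2]⟩
  · rintro ⟨m, hm, rfl⟩
    exact ⟨m, (H.reached_iff m).2 hm, by rw [(H m hm).1, (H m hm).2]⟩

/-- If `l ⊆ g` and each edge of `g` lies in some graph `h` whose sequences agree with those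
of `l`, then the sequences of `g` agree with those of `l`. -/
lemma agree_of_edgewise {N : ℕ} (hN : 2 ≤ N) {l g : Finset (ℕ × ℕ)} (hl : IsGraph N l)
    (hli : IsIrred N l) (hg : IsGraph N g) (hgi : IsIrred N g) (hsub : l ⊆ g)
    (H : ∀ e ∈ g, ∃ h : Finset (ℕ × ℕ), e ∈ h ∧ Agree N l h) : Agree N l g := by
  intro m
  induction m with
  | zero =>
    intro hm
    refine ⟨le_antisymm ?_ ?_, rfl⟩
    · obtain ⟨h, heh, hA⟩ := H _ (exists_jseq_zero hN hg hgi)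
      rw [← (hA 0 hm).1]
      exact le_jseq_zero heh rfl
    · exact le_jseq_zero (hsub (exists_jseq_zero hN hl hli)) rfl
  | succ m ih =>
    intro hm
    have hm0 := hm.mono m.le_succ
    have hj := (ih hm0).1
    have hstep := step_lt hN hl hli hm
    have hedge := edge_mem hN hl hli _ hm
    have hb := hl _ (edge_mem hN hl hli m hm0)
    have hne := hm m m.lt_succ_self
    simp only at hb
    have hJ : jseq g (m + 1) = jseq l (m + 1) := by
      apply le_antisymm
      · obtain ⟨e, he, h1, h2, h3⟩ := exists_jseq_succ hgi (m := m) (by omega) (by omega)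
        obtain ⟨h, heh, hA⟩ := H e he
        have hh := (hA m hm0).1
        rw [← (hA (m + 1) hm).1, ← h3]
        exact le_jseq_succ heh (by omega) (by omega)
      · exact le_jseq_succ (hsub hedge) (by rw [hj]; exact hstep.1) (by rw [hj]; exact hstep.2)
    refine ⟨hJ, le_antisymm ?_ ?_⟩
    · apply Nat.sInf_le
      rw [Set.mem_ofPred_eq, hJ]
      exact hsub hedge
    · have hmem : (iseq g (m + 1), jseq g (m + 1)) ∈ g :=
        Nat.sInf_mem (s := {i | (i, jseq g (m + 1)) ∈ g})
          ⟨iseq l (m + 1), by rw [Set.mem_ofPred_eq, hJ]; exact hsub hedge⟩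
      obtain ⟨h, heh, hA⟩ := H _ hmem
      rw [← (hA (m + 1) hm).2]
      apply Nat.sInf_le
      rw [Set.mem_ofPred_eq, (hA (m + 1) hm).1, ← hJ]
      exact heh

/-- If every edge selected in `g` belongs to `l ⊆ g`, then the construction makes the same
choices in `l` as in `g`. -/
lemma agree_of_laceOf_subset {N : ℕ} (hN : 2 ≤ N) {l g : Finset (ℕ × ℕ)} (hl : IsGraph N l)
    (hli : IsIrred N l) (hg : IsGraph N g) (hgi : IsIrred N g) (hsub : l ⊆ g)
    (H : laceOf N g ⊆ (l : Set (ℕ × ℕ))) : Agree N g l := by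
  intro m
  induction m with
  | zero =>
    intro hm
    refine ⟨le_antisymm ?_ ?_, rfl⟩
    · exact le_jseq_zero (hsub (exists_jseq_zero hN hl hli)) rfl
    · exact le_jseq_zero (H ⟨0, hm, rfl⟩ : (iseq g 0, jseq g 0) ∈ l) rfl
  | succ m ih =>
    intro hm
    have hm0 := hm.mono m.le_succ
    have hj := (ih hm0).1
    have hstep := step_lt hN hg hgi hm
    have hedge : (iseq g (m + 1), jseq g (m + 1)) ∈ l := H ⟨m + 1, hm, rfl⟩
    have hb := hg _ (edge_mem hN hg hgi m hm0)
    have hne := hm m m.lt_succ_self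
    simp only at hb
    have hJ : jseq l (m + 1) = jseq g (m + 1) := by
      apply le_antisymm
      · obtain ⟨e, he, h1, h2, h3⟩ := exists_jseq_succ hli (m := m) (by omega) (by omega)
        rw [← h3]
        exact le_jseq_succ (hsub he) (by omega) (by omega)
      · exact le_jseq_succ hedge (by rw [hj]; exact hstep.1) (by rw [hj]; exact hstep.2)
    refine ⟨hJ, le_antisymm ?_ ?_⟩
    · apply Nat.sInf_le
      rw [Set.mem_ofPred_eq, hJ]
      exact hedge
    · have hmem : (iseq l (m + 1), jseq l (m + 1)) ∈ l :=
        Nat.sInf_mem (s := {i | (i, jseq l (m + 1)) ∈ l})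
          ⟨iseq g (m + 1), by rw [Set.mem_ofPred_eq, hJ]; exact hedge⟩
      apply Nat.sInf_le
      rw [Set.mem_ofPred_eq, ← hJ]
      exact hsub hmem

theorem stmt5 (N : ℕ) (hN : 2 ≤ N) (l g : Finset (ℕ × ℕ))
    (hl : IsLace N l) (hg : IsGraph N g) (hgirr : IsIrred N g) (hsub : l ⊆ g) :
    laceOf N g = (l : Set (ℕ × ℕ)) ↔
      ∀ e ∈ g, e ∉ l → laceOf N (insert e l) = (l : Set (ℕ × ℕ)) := by
  have hself := laceOf_lace hN hl
  obtain ⟨hlg, hli, -⟩ := hl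
  have hins : ∀ e ∈ g, insert e l ⊆ g := fun e he => Finset.insert_subset he hsub
  have hinsG : ∀ e ∈ g, IsGraph N (insert e l) := fun e he f hf => hg f (hins e he hf)
  have hinsI : ∀ e, IsIrred N (insert e l) := fun e k hk hkN => by
    obtain ⟨f, hf, h⟩ := hli k hk hkN
    exact ⟨f, Finset.mem_insert_of_mem hf, h⟩
  constructor
  · intro h e he _
    have hA := (agree_of_laceOf_subset hN hlg hli hg hgirr hsub h.subset).symm
    -- The graph `g` itself serves as witness for every edge of `insert e l ⊆ g`.
    have hB := agree_of_edgewise hN hlg hli (hinsG e he) (hinsI e)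
      (Finset.subset_insert e l) fun f hf => ⟨g, hins e he hf, hA⟩
    rw [hB.laceOf_eq, hself]
  · intro h
    have hB : Agree N l g := by
      refine agree_of_edgewise hN hlg hli hg hgirr hsub fun e he => ?_
      by_cases hel : e ∈ l
      · exact ⟨l, hel, fun _ _ => ⟨rfl, rfl⟩⟩
      · exact ⟨insert e l, Finset.mem_insert_self e l,
          (agree_of_laceOf_subset hN hlg hli (hinsG e he) (hinsI e)
            (Finset.subset_insert e l) (h e he hel).subset).symm⟩
    rw [hB.laceOf_eq, hself]
end

section
/- Let N ≥ 2 and let ℓ be a lace on {1,…,N} with n ≥ 3 edges. Then the edges of ℓ can be enumerated as (i₁,j₁), (i₂,j₂), …, (i_n,j_n) with i₁ < i₂ < ⋯ < i_n, and this enumeration satisfies the chain of inequalities 1 = i₁ < i₂ ≤ j₁ < i₃ ≤ j₂ < i₄ ≤ j₃ < ⋯ < i_{n−1} ≤ j_{n−2} < i_n ≤ j_{n−1} < j_n = N (that is, i₁ = 1, j_n = N, and for each 1 ≤ m ≤ n−1 one has i_{m+1} ≤ j_m, while for each 1 ≤ m ≤ n−2 one has j_m < i_{m+2}, and j_{n−1}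 < j_n). -/
/-- No edge `b` of a lace is contained in the union of edges `a`, `c` (possibly equal) of the lace
which are different from `b` and leave no gap between them. -/
theorem IsLace.not_redundant {N : ℕ} {l : Finset (ℕ × ℕ)} (hl : IsLace N l) {a b c : ℕ × ℕ}
    (ha : a ∈ l) (hb : b ∈ l) (hc : c ∈ l) (hab : a ≠ b) (hcb : c ≠ b)
    (h1 : a.1 ≤ b.1) (h2 : b.2 ≤ c.2) : a.2 < c.1 := by
  by_contra! h
  refine hl.2.2 b hb fun k hk hkN => ?_
  obtain ⟨e, he, hek, hke⟩ := hl.2.1 k hk hkN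
  by_cases heb : e = b
  · subst heb
    by_cases hka : k < a.2
    · exact ⟨a, Finset.mem_erase.2 ⟨hab, ha⟩, by omega, hka⟩
    · exact ⟨c, Finset.mem_erase.2 ⟨hcb, hc⟩, by omega, by omega⟩
  · exact ⟨e, Finset.mem_erase.2 ⟨heb, he⟩, hek, hke⟩

theorem IsLace.eq_of_nested {N : ℕ} {l : Finset (ℕ × ℕ)} (hl : IsLace N l) {a b : ℕ × ℕ}
    (ha : a ∈ l) (hb : b ∈ l) (h1 : a.1 ≤ b.1) (h2 : b.2 ≤ a.2) : a = b := by
  by_contra hab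
  have := hl.not_redundant ha hb ha hab hab h1 h2
  have := hl.1 a ha
  omega

theorem IsLace.injOn_fst {N : ℕ} {l : Finset (ℕ × ℕ)} (hl : IsLace N l) :
    Set.InjOn Prod.fst (l : Set (ℕ × ℕ)) := by
  intro a ha b hb hab
  rcases le_total b.2 a.2 with h | h
  · exact hl.eq_of_nested ha hb hab.le h
  · exact (hl.eq_of_nested hb ha hab.ge h).symm

theorem stmt6 (N : ℕ) (hN : 2 ≤ N) (l : Finset (ℕ × ℕ)) (hl : IsLace N l)
    (n : ℕ) (hn : l.card = n) (h3 : 3 ≤ n) :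
    ∃ i j : ℕ → ℕ,
      l = (Finset.range n).image (fun m => (i m, j m)) ∧
      (∀ m₁ m₂, m₁ < m₂ → m₂ < n → i m₁ < i m₂) ∧
      i 0 = 1 ∧ j (n - 1) = N ∧
      (∀ m, m + 1 < n → i (m + 1) ≤ j m) ∧
      (∀ m, m + 2 < n → j m < i (m + 2)) ∧
      j (n - 2) < j (n - 1) := by
  have hcard : (l.image Prod.fst).card = n := by
    rw [Finset.card_image_of_injOn hl.injOn_fst, hn]
  obtain ⟨i, himem, himono⟩ : ∃ i : ℕ → ℕ, (∀ m < n, i m ∈ l.image Prod.fst) ∧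
      ∀ m₁ m₂, m₁ < m₂ → m₂ < n → i m₁ < i m₂ := by
    refine ⟨fun m => if h : m < n then (l.image Prod.fst).orderEmbOfFin hcard ⟨m, h⟩ else 0,
      fun m hm => ?_, fun m₁ m₂ h h₂ => ?_⟩
    · simp only [hm, dif_pos]
      exact Finset.orderEmbOfFin_mem _ _ _
    · simp only [h₂, h.trans h₂, dif_pos]
      exact ((l.image Prod.fst).orderEmbOfFin hcard).strictMono h
  have hex : ∀ m, ∃ y, m < n → (i m, y) ∈ l := by
    intro m
    by_cases hm : m < n
    · obtain ⟨e, he, hei⟩ := Finset.mem_image.1 (himem m hm)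
      exact ⟨e.2, fun _ => hei ▸ he⟩
    · exact ⟨0, fun h => absurd h hm⟩
  choose j hj using hex
  have hjmono : ∀ m₁ m₂, m₁ < m₂ → m₂ < n → j m₁ < j m₂ := by
    intro m₁ m₂ h h₂
    have hi := himono m₁ m₂ h h₂
    by_contra! hle
    have := congrArg Prod.fst
      (hl.eq_of_nested (hj m₁ (h.trans h₂)) (hj m₂ h₂) hi.le hle)
    simp only at this
    omega
  have hne : ∀ m₁ m₂, m₁ < m₂ → m₂ < n → (i m₁, j m₁) ≠ (i m₂, j m₂) := by
    intro m₁ m₂ h h₂ heq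
    have := himono m₁ m₂ h h₂
    rw [Prod.mk.injEq] at heq
    omega
  have himage : (Finset.range n).image (fun m => (i m, j m)) = l := by
    apply Finset.eq_of_subset_of_card_le
    · intro e he
      obtain ⟨m, hm, rfl⟩ := Finset.mem_image.1 he
      exact hj m (Finset.mem_range.1 hm)
    · rw [Finset.card_image_of_injOn, Finset.card_range, hn]
      intro m₁ h₁ m₂ h₂ heq
      simp only [Finset.coe_range, Set.mem_Iio] at h₁ h₂
      rcases lt_trichotomy m₁ m₂ with h | h | h
      · exact absurd heq (hne _ _ h h₂)
      · exact h
      · exact absurd heq.symm (hne _ _ h h₁)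
  have hcover : ∀ k, 1 ≤ k → k < N → ∃ m < n, i m ≤ k ∧ k < j m := by
    intro k hk hkN
    obtain ⟨e, he, hek, hke⟩ := hl.2.1 k hk hkN
    rw [← himage] at he
    obtain ⟨m, hm, rfl⟩ := Finset.mem_image.1 he
    exact ⟨m, Finset.mem_range.1 hm, hek, hke⟩
  have hgraph : ∀ m < n, 1 ≤ i m ∧ i m < j m ∧ j m ≤ N := fun m hm => hl.1 _ (hj m hm)
  refine ⟨i, j, himage.symm, himono, ?_, ?_, fun m hm => ?_, fun m hm => ?_,
    hjmono _ _ (by omega) (by omega)⟩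
  · obtain ⟨m, hm, hm1, -⟩ := hcover 1 le_rfl (by omega)
    have := hgraph 0 (by omega)
    rcases Nat.eq_zero_or_pos m with rfl | h
    · omega
    · have := himono 0 m h hm
      omega
  · obtain ⟨m, hm, -, hm1⟩ := hcover (N - 1) (by omega) (by omega)
    have := hgraph (n - 1) (by omega)
    rcases (show m ≤ n - 1 by omega).eq_or_lt with rfl | h
    · omega
    · have := hjmono m (n - 1) h (by omega)
      omega
  · by_contra! hlt
    have hm0 := hgraph m (by omega)
    have hm1 := hgraph (m + 1) hm
    -- The point `j m` cannot be covered: edges up to `m` end too early, later ones start too late.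
    obtain ⟨p, hp, hp1, hp2⟩ := hcover (j m) (by omega) (by omega)
    rcases lt_trichotomy p m with h | rfl | h
    · have := hjmono p m h (by omega)
      omega
    · omega
    · rcases (show m + 1 ≤ p from h).eq_or_lt with rfl | h'
      · omega
      · have := himono (m + 1) p h' hp
        omega
  · exact hl.not_redundant (hj m (by omega)) (hj (m + 1) (by omega)) (hj (m + 2) hm)
      (hne _ _ (by omega) (by omega)) (hne _ _ (by omega) hm).symm
      (himono _ _ (by omega) (by omega)).le (hjmono _ _ (by omega) hm).le
end

section
/- Let d ≥ 1 and let f, g : ℝ^d → ℝ be continuous functions with ‖f‖ < ∞ and ‖g‖ < ∞. Then the convolution f⋆g (defined by (f⋆g)(x) = ∫_{ℝ^d} f(y) g(x−y) dy) is a continuous function with ‖f⋆g‖ < ∞, and moreover ‖f⋆g‖ ≤ 2^{d+1} ‖f‖ ‖g‖. -/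
/-!
Everything follows from the pointwise bound `|f⋆g|(x) ≤ ∫ |f(y)| |g(x-y)| dy` in `[0,∞]`.
Tonelli and translation invariance bound the `L¹` part by `‖f‖ ‖g‖`, and the sup bound on `g` does
the same for the sup part. For the weighted part, `‖x‖ ≤ ‖y‖ + ‖x-y‖` gives
`‖x‖^d ≤ 2^d (‖y‖^d + ‖x-y‖^d)`; the weight is absorbed by `f` in the first summand and by `g` in
the second, and each of the two remaining integrals is an `L¹` norm, whence the factor
`2^d * 2 = 2^(d+1)`. Continuity is dominated convergence with dominating function `‖g‖ |f|`.
-/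

open scoped ENNReal
open MeasureTheory

/-- The norm `‖f‖ = max(∫|f|, sup|f|, sup |x|^d |f(x)|) ∈ [0,∞]`. -/
noncomputable def Bnorm (d : ℕ) (f : EuclideanSpace ℝ (Fin d) → ℝ) : ℝ≥0∞ :=
  max (∫⁻ x, ENNReal.ofReal |f x|)
    (max (⨆ x : EuclideanSpace ℝ (Fin d), ENNReal.ofReal |f x|)
      (⨆ x : EuclideanSpace ℝ (Fin d), ENNReal.ofReal (‖x‖ ^ d * |f x|)))

/-- Convolution `(f⋆g)(x) = ∫ f(y) g(x−y) dy`. -/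
noncomputable def convol (d : ℕ) (f g : EuclideanSpace ℝ (Fin d) → ℝ)
    (x : EuclideanSpace ℝ (Fin d)) : ℝ :=
  ∫ y, f y * g (x - y)

lemma lintegral_le_Bnorm (d : ℕ) (f : EuclideanSpace ℝ (Fin d) → ℝ) :
    ∫⁻ x, ENNReal.ofReal |f x| ≤ Bnorm d f := le_max_left _ _

lemma ofReal_abs_le_Bnorm (d : ℕ) (f : EuclideanSpace ℝ (Fin d) → ℝ)
    (x : EuclideanSpace ℝ (Fin d)) : ENNReal.ofReal |f x| ≤ Bnorm d f :=
  (le_iSup (fun x => ENNReal.ofReal |f x|) x).trans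
    ((le_max_left _ _).trans (le_max_right _ _))

lemma ofReal_weight_le_Bnorm (d : ℕ) (f : EuclideanSpace ℝ (Fin d) → ℝ)
    (x : EuclideanSpace ℝ (Fin d)) :
    ENNReal.ofReal (‖x‖ ^ d) * ENNReal.ofReal |f x| ≤ Bnorm d f := by
  rw [← ENNReal.ofReal_mul (by positivity)]
  exact (le_iSup (fun x : EuclideanSpace ℝ (Fin d) => ENNReal.ofReal (‖x‖ ^ d * |f x|)) x).trans
    ((le_max_right _ _).trans (le_max_right _ _))

lemma lintegral_sub_left_le_Bnorm (d : ℕ) (g : EuclideanSpace ℝ (Fin d) → ℝ)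
    (x : EuclideanSpace ℝ (Fin d)) :
    ∫⁻ y, ENNReal.ofReal |g (x - y)| ≤ Bnorm d g := by
  rw [lintegral_sub_left_eq_self (fun y => ENNReal.ofReal |g y|) x]
  exact lintegral_le_Bnorm d g

lemma ofReal_abs_convol_le (d : ℕ) (f g : EuclideanSpace ℝ (Fin d) → ℝ)
    (x : EuclideanSpace ℝ (Fin d)) :
    ENNReal.ofReal |convol d f g x| ≤
      ∫⁻ y, ENNReal.ofReal |f y| * ENNReal.ofReal |g (x - y)| := by
  have h := enorm_integral_le_lintegral_enorm (μ := volume) (fun y => f y * g (x - y))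
  simpa only [convol, Real.enorm_eq_ofReal_abs, abs_mul, ENNReal.ofReal_mul (abs_nonneg _)] using h

lemma norm_pow_le_two_pow (d : ℕ) (x y : EuclideanSpace ℝ (Fin d)) :
    ENNReal.ofReal (‖x‖ ^ d) ≤
      2 ^ d * (ENNReal.ofReal (‖y‖ ^ d) + ENNReal.ofReal (‖x - y‖ ^ d)) := by
  have h1 : ‖x‖ ≤ ‖y‖ + ‖x - y‖ := by simpa using norm_add_le y (x - y)
  have h2 : ‖x‖ ^ d ≤ 2 ^ d * (‖y‖ ^ d + ‖x - y‖ ^ d) := by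
    have hy : 0 ≤ ‖y‖ ^ d := by positivity
    have hxy : 0 ≤ ‖x - y‖ ^ d := by positivity
    rcases le_total ‖y‖ ‖x - y‖ with h | h
    · calc ‖x‖ ^ d ≤ (2 * ‖x - y‖) ^ d := by gcongr; linarith
        _ = 2 ^ d * ‖x - y‖ ^ d := mul_pow _ _ _
        _ ≤ _ := by gcongr; linarith
    · calc ‖x‖ ^ d ≤ (2 * ‖y‖) ^ d := by gcongr; linarith
        _ = 2 ^ d * ‖y‖ ^ d := mul_pow _ _ _
        _ ≤ _ := by gcongr; linarith
  refine (ENNReal.ofReal_le_ofReal h2).trans_eq ?_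
  rw [ENNReal.ofReal_mul (by positivity), ENNReal.ofReal_add (by positivity) (by positivity),
    ENNReal.ofReal_pow (by norm_num) d, ENNReal.ofReal_ofNat]

lemma continuous_convol (d : ℕ) (f g : EuclideanSpace ℝ (Fin d) → ℝ)
    (hf : Continuous f) (hg : Continuous g)
    (hfB : Bnorm d f < ⊤) (hgB : Bnorm d g < ⊤) : Continuous (convol d f g) := by
  have hfi : Integrable f := by
    refine ⟨hf.aestronglyMeasurable, ?_⟩
    simpa only [HasFiniteIntegral, Real.enorm_eq_ofReal_abs] using
      (lintegral_le_Bnorm d f).trans_lt hfB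
  have hgb : ∀ z, |g z| ≤ (Bnorm d g).toReal := fun z =>
    (ENNReal.ofReal_le_iff_le_toReal hgB.ne).1 (ofReal_abs_le_Bnorm d g z)
  refine continuous_of_dominated (bound := fun y => |f y| * (Bnorm d g).toReal)
    (fun x => (by fun_prop : Continuous fun y => f y * g (x - y)).aestronglyMeasurable)
    (fun x => ae_of_all _ fun y => ?_) (hfi.abs.mul_const _)
    (ae_of_all _ fun y => by fun_prop)
  rw [Real.norm_eq_abs, abs_mul]
  exact mul_le_mul_of_nonneg_left (hgb _) (abs_nonneg _)

lemma lintegral_convol_le (d : ℕ) (f g : EuclideanSpace ℝ (Fin d) → ℝ)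
    (hf : Continuous f) (hg : Continuous g) :
    ∫⁻ x, ENNReal.ofReal |convol d f g x| ≤ Bnorm d f * Bnorm d g := by
  have hF : Measurable fun y => ENNReal.ofReal |f y| := by fun_prop
  have hG : Measurable fun y => ENNReal.ofReal |g y| := by fun_prop
  calc ∫⁻ x, ENNReal.ofReal |convol d f g x|
      ≤ ∫⁻ x, ∫⁻ y, ENNReal.ofReal |f y| * ENNReal.ofReal |g (x - y)| :=
        lintegral_mono fun x => ofReal_abs_convol_le d f g x
    _ = ∫⁻ y, ∫⁻ x, ENNReal.ofReal |f y| * ENNReal.ofReal |g (x - y)| :=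
        lintegral_lintegral_swap (by fun_prop)
    _ ≤ ∫⁻ y, ENNReal.ofReal |f y| * Bnorm d g := by
        refine lintegral_mono fun y => ?_
        rw [lintegral_const_mul _ (by fun_prop),
          lintegral_sub_right_eq_self (fun x => ENNReal.ofReal |g x|) y]
        gcongr
        exact lintegral_le_Bnorm d g
    _ = (∫⁻ y, ENNReal.ofReal |f y|) * Bnorm d g := lintegral_mul_const _ hF
    _ ≤ _ := by gcongr; exact lintegral_le_Bnorm d f

lemma abs_convol_le (d : ℕ) (f g : EuclideanSpace ℝ (Fin d) → ℝ) (hf : Continuous f)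
    (x : EuclideanSpace ℝ (Fin d)) :
    ENNReal.ofReal |convol d f g x| ≤ Bnorm d f * Bnorm d g := by
  have hF : Measurable fun y => ENNReal.ofReal |f y| := by fun_prop
  calc _ ≤ ∫⁻ y, ENNReal.ofReal |f y| * ENNReal.ofReal |g (x - y)| := ofReal_abs_convol_le d f g x
    _ ≤ ∫⁻ y, ENNReal.ofReal |f y| * Bnorm d g := by
        gcongr with y
        exact ofReal_abs_le_Bnorm d g _
    _ = (∫⁻ y, ENNReal.ofReal |f y|) * Bnorm d g := lintegral_mul_const _ hF
    _ ≤ _ := by gcongr; exact lintegral_le_Bnorm d f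

lemma weight_convol_le (d : ℕ) (f g : EuclideanSpace ℝ (Fin d) → ℝ)
    (hf : Continuous f) (hg : Continuous g) (x : EuclideanSpace ℝ (Fin d)) :
    ENNReal.ofReal (‖x‖ ^ d * |convol d f g x|) ≤ 2 ^ (d + 1) * Bnorm d f * Bnorm d g := by
  have hF : Measurable fun y => ENNReal.ofReal |f y| := by fun_prop
  have hG : Measurable fun y => ENNReal.ofReal |g (x - y)| := by fun_prop
  rw [ENNReal.ofReal_mul (by positivity)]
  calc _ ≤ ENNReal.ofReal (‖x‖ ^ d) * ∫⁻ y, ENNReal.ofReal |f y| * ENNReal.ofReal |g (x - y)| := by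
        gcongr
        exact ofReal_abs_convol_le d f g x
    _ = ∫⁻ y, ENNReal.ofReal (‖x‖ ^ d) * (ENNReal.ofReal |f y| * ENNReal.ofReal |g (x - y)|) :=
        (lintegral_const_mul _ (hF.mul hG)).symm
    _ ≤ ∫⁻ y, 2 ^ d * (Bnorm d f * ENNReal.ofReal |g (x - y)|
          + Bnorm d g * ENNReal.ofReal |f y|) := by
        refine lintegral_mono fun y => ?_
        calc _ ≤ 2 ^ d * (ENNReal.ofReal (‖y‖ ^ d) + ENNReal.ofReal (‖x - y‖ ^ d)) *
              (ENNReal.ofReal |f y| * ENNReal.ofReal |g (x - y)|) := by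
              gcongr
              exact norm_pow_le_two_pow d x y
          _ = 2 ^ d * ((ENNReal.ofReal (‖y‖ ^ d) * ENNReal.ofReal |f y|) *
                ENNReal.ofReal |g (x - y)| +
              (ENNReal.ofReal (‖x - y‖ ^ d) * ENNReal.ofReal |g (x - y)|) *
                ENNReal.ofReal |f y|) := by ring
          _ ≤ _ := by
              gcongr
              · exact ofReal_weight_le_Bnorm d f y
              · exact ofReal_weight_le_Bnorm d g (x - y)
    _ = 2 ^ d * (Bnorm d f * (∫⁻ y, ENNReal.ofReal |g (x - y)|)
          + Bnorm d g * ∫⁻ y, ENNReal.ofReal |f y|) := by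
        rw [lintegral_const_mul _ (by fun_prop), lintegral_add_left (by fun_prop),
          lintegral_const_mul _ hG, lintegral_const_mul _ hF]
    _ ≤ 2 ^ d * (Bnorm d f * Bnorm d g + Bnorm d g * Bnorm d f) := by
        gcongr
        · exact lintegral_sub_left_le_Bnorm d g x
        · exact lintegral_le_Bnorm d f
    _ = _ := by ring

theorem stmt7 (d : ℕ) (hd : 1 ≤ d) (f g : EuclideanSpace ℝ (Fin d) → ℝ)
    (hf : Continuous f) (hg : Continuous g)
    (hfB : Bnorm d f < ⊤) (hgB : Bnorm d g < ⊤) :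
    Continuous (convol d f g) ∧
      Bnorm d (convol d f g) ≤ 2 ^ (d + 1) * Bnorm d f * Bnorm d g := by
  refine ⟨continuous_convol d f g hf hg hfB hgB, ?_⟩
  have h1 : Bnorm d f * Bnorm d g ≤ 2 ^ (d + 1) * Bnorm d f * Bnorm d g := by
    rw [mul_assoc]
    exact le_mul_of_one_le_left zero_le (one_le_pow₀ one_le_two)
  exact max_le ((lintegral_convol_le d f g hf hg).trans h1)
    (max_le (iSup_le fun x => (abs_convol_le d f g hf x).trans h1)
      (iSup_le fun x => weight_convol_le d f g hf hg x))
end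

section
/- Let d ≥ 5. There exists a constant C = C(d) < ∞ such that for every continuous rotationally invariant function ρ : ℝ^d → ℝ (i.e., ρ(x) depends only on |x|) satisfying |ρ(x)| ≤ (1+|x|)^{−d−4} for all x and ∫_{ℝ^d} ρ(x) dx = 0, the convolution ρ⋆G is continuous and satisfies ‖ρ⋆G‖ ≤ C. -/
/-!
Since `ρ` is radial with mean zero, it is the Laplacian of a radial function `W` that decays
like `(1+|x|)^{-(d+1)}`: the field `∇W = k(|x|) x` has `k(r) = r^{-d} ∫_0^r p(s) s^{d-1} ds`, with
`p` the radial profile of `ρ`, and by the mean-zero condition the integral may be taken over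
`[r, ∞)` instead, so that `k` decays like `ρ` itself (`prof_bound`, `exists_potential`).

Two integrations by parts and the heat equation `Δφ_t = 2 ∂_t φ_t` give
`ρ ⋆ φ_n = W ⋆ 2 ∂_t φ_t |_{t=n}` (`conv_gaussK_eq`), and summing over `n`, `ρ ⋆ G = W ⋆ H` with
`H = ∑ 2 ∂_t φ_t |_{t=n}`.

The function `H` also decays like `(1+|x|)^{-(d+1)}` (`tsum_heat1_bound`). With `g(t) = φ_t(x)`, the
sum `∑_{n≥2} g'(n)` differs from the telescoping sum `∑_{n≥2} (g(n) - g(n-1)) = -g(1)` by at most a sum of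
values of `|g''|`, and `|g''(t)|` is at most a multiple of `t^{-d/2-2} (1+|x|²/t)^{-(d+1)}`, hence of
`|x|^{-(d+1)} t^{-3/2}`.

The weight `(1+|x|)^{-(d+1)}` is integrable and preserved under convolution (`conv_wt_bound`), and it
controls the three quantities in the norm (`Bnorm_le_of_wt`). Continuity is dominated convergence, as `G`
is bounded and continuous.
-/


open scoped ENNReal
open MeasureTheory

/-- The Gaussian density `φ_t(x) = (2πt)^{−d/2} exp(−|x|²/(2t))`. -/
noncomputable def gaussK (d : ℕ) (t : ℝ) (x : EuclideanSpace ℝ (Fin d)) : ℝ :=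
  (2 * Real.pi * t) ^ (-(d : ℝ) / 2) * Real.exp (-‖x‖ ^ 2 / (2 * t))

/-- The Green function `G(x) = Σ_{n≥1} φ_n(x)`. -/
noncomputable def Gfun (d : ℕ) (x : EuclideanSpace ℝ (Fin d)) : ℝ :=
  ∑' n : ℕ, gaussK d ((n : ℝ) + 1) x

/-! ### Time derivatives of the heat kernel -/

theorem one_add_pow_mul_exp_le (N : ℕ) :
    ∃ C : ℝ, 0 ≤ C ∧ ∀ z : ℝ, 0 ≤ z → (1 + z) ^ N * Real.exp (-z / 2) ≤ C := by
  refine ⟨2 ^ N * N.factorial * Real.exp (1 / 2), by positivity, fun z hz => ?_⟩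
  have h := Real.pow_div_factorial_le_exp (x := (1 + z) / 2) (by positivity) N
  rw [div_le_iff₀ (by positivity), div_pow, div_le_iff₀ (by positivity)] at h
  calc (1 + z) ^ N * Real.exp (-z / 2)
      ≤ (Real.exp ((1 + z) / 2) * N.factorial * 2 ^ N) * Real.exp (-z / 2) := by gcongr
    _ = 2 ^ N * N.factorial * (Real.exp ((1 + z) / 2) * Real.exp (-z / 2)) := by ring
    _ = 2 ^ N * N.factorial * Real.exp (1 / 2) := by
        rw [← Real.exp_add]; congr 2; ring

/-- The heat kernel as a function of `a = |x|²` and of the time `t`. -/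
noncomputable def heat (d : ℕ) (a t : ℝ) : ℝ :=
  (2 * Real.pi * t) ^ (-(d : ℝ) / 2) * Real.exp (-a / (2 * t))

/-- The derivative of `heat d a` at times `t > 0`. -/
noncomputable def heat1 (d : ℕ) (a t : ℝ) : ℝ :=
  heat d a t * (a / (2 * t ^ 2) - d / (2 * t))

/-- The second derivative of `heat d a` at times `t > 0`. -/
noncomputable def heat2 (d : ℕ) (a t : ℝ) : ℝ :=
  heat d a t * ((a / (2 * t ^ 2) - d / (2 * t)) ^ 2 + (-(a / t ^ 3) + d / (2 * t ^ 2)))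

theorem hasDerivAt_heat (d : ℕ) (a : ℝ) {t : ℝ} (ht : 0 < t) :
    HasDerivAt (heat d a) (heat1 d a t) t := by
  have hp : 0 < 2 * Real.pi * t := by positivity
  have h1 : HasDerivAt (fun s : ℝ => (2 * Real.pi * s) ^ (-(d : ℝ) / 2))
      (2 * Real.pi * (-(d : ℝ) / 2) * (2 * Real.pi * t) ^ (-(d : ℝ) / 2 - 1)) t := by
    have := ((hasDerivAt_id t).const_mul (2 * Real.pi)).rpow_const (p := -(d : ℝ) / 2)
      (Or.inl hp.ne')
    simpa using this
  have h2 : HasDerivAt (fun s : ℝ => Real.exp (-a / (2 * s)))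
      (Real.exp (-a / (2 * t)) * (a / (2 * t ^ 2))) t := by
    have h3 : HasDerivAt (fun s : ℝ => -a / (2 * s)) (a / (2 * t ^ 2)) t := by
      have := (hasDerivAt_const t (-a)).div ((hasDerivAt_id t).const_mul 2)
        (by simpa using ht.ne')
      refine this.congr_deriv ?_
      simp only [id]
      field_simp
      ring
    exact h3.exp
  refine (h1.mul h2).congr_deriv ?_
  rw [Real.rpow_sub_one hp.ne']
  unfold heat1 heat
  field_simp
  ring

theorem hasDerivAt_heat1 (d : ℕ) (a : ℝ) {t : ℝ} (ht : 0 < t) :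
    HasDerivAt (heat1 d a) (heat2 d a t) t := by
  have h3 : HasDerivAt (fun s : ℝ => a / (2 * s ^ 2) - d / (2 * s))
      (-(a / t ^ 3) + d / (2 * t ^ 2)) t := by
    have e1 := (hasDerivAt_const t a).div ((hasDerivAt_pow 2 t).const_mul 2)
      (by positivity)
    have e2 := (hasDerivAt_const t (d : ℝ)).div ((hasDerivAt_id t).const_mul 2)
      (by simpa using ht.ne')
    refine (e1.sub e2).congr_deriv ?_
    simp only [id]
    field_simp
    ring
  refine ((hasDerivAt_heat d a ht).mul h3).congr_deriv ?_
  unfold heat2 heat1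
  ring

theorem heat_nonneg (d : ℕ) (a : ℝ) {t : ℝ} (ht : 0 < t) : 0 ≤ heat d a t := by
  unfold heat; positivity

theorem heat_le (d : ℕ) (a : ℝ) {t : ℝ} (ht : 0 < t) :
    heat d a t ≤ t ^ (-(d : ℝ) / 2) * Real.exp (-(a / t) / 2) := by
  unfold heat
  have e : -a / (2 * t) = -(a / t) / 2 := by field_simp
  rw [e]
  gcongr ?_ * _
  refine Real.rpow_le_rpow_of_nonpos ht ?_ ?_
  · nlinarith [Real.pi_gt_three]
  · have : (0 : ℝ) ≤ d := by positivity
    linarith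

/-- Each time derivative of the heat kernel gains a factor `1/t`, and all of them decay faster
than any power of `|x|²/t`; the power `d + 1` is the one used below. -/
theorem heat_bounds (d : ℕ) : ∃ C : ℝ, 0 ≤ C ∧ ∀ a t : ℝ, 0 ≤ a → 0 < t →
    |heat d a t| * (1 + a / t) ^ (d + 1) ≤ C * t ^ (-(d : ℝ) / 2) ∧
    |heat1 d a t| * (1 + a / t) ^ (d + 1) ≤ C * t ^ (-(d : ℝ) / 2 - 1) ∧
    |heat2 d a t| * (1 + a / t) ^ (d + 1) ≤ C * t ^ (-(d : ℝ) / 2 - 2) := by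
  obtain ⟨C, hC, h⟩ := one_add_pow_mul_exp_le (d + 3)
  refine ⟨(d + 2) ^ 2 * C, by positivity, fun a t ha ht => ?_⟩
  set z := a / t with hz
  have hz0 : 0 ≤ z := by positivity
  have hd0 : (0 : ℝ) ≤ d := by positivity
  have haz : a = z * t := by rw [hz]; field_simp
  -- A factor of size `(1 + z)²` is absorbed by the exponential.
  have key : ∀ w : ℝ, |w| ≤ (d + 2) ^ 2 * (1 + z) ^ 2 →
      |heat d a t * w| * (1 + z) ^ (d + 1) ≤ (d + 2) ^ 2 * C * t ^ (-(d : ℝ) / 2) := by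
    intro w hw
    rw [abs_mul, abs_of_nonneg (heat_nonneg d a ht)]
    calc heat d a t * |w| * (1 + z) ^ (d + 1)
        ≤ (t ^ (-(d : ℝ) / 2) * Real.exp (-z / 2)) * ((d + 2) ^ 2 * (1 + z) ^ 2)
            * (1 + z) ^ (d + 1) := by
          gcongr
          exact heat_le d a ht
      _ = (d + 2) ^ 2 * ((1 + z) ^ (d + 3) * Real.exp (-z / 2)) * t ^ (-(d : ℝ) / 2) := by
          ring
      _ ≤ (d + 2) ^ 2 * C * t ^ (-(d : ℝ) / 2) := by
          gcongr
          exact h z hz0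
  refine ⟨?_, ?_, ?_⟩
  · have := key 1 (by rw [abs_one]; nlinarith [sq_nonneg z, mul_nonneg hd0 hz0])
    simpa using this
  · have h1 := key (z / 2 - d / 2) (by
      rw [abs_le]; constructor <;>
      nlinarith [sq_nonneg z, mul_nonneg hd0 hz0, mul_nonneg (mul_nonneg hd0 hd0) hz0,
        mul_nonneg (mul_nonneg hd0 hd0) (sq_nonneg z), mul_nonneg hd0 (sq_nonneg z), sq_nonneg (d : ℝ)])
    have e : heat1 d a t = heat d a t * (z / 2 - d / 2) / t := by
      unfold heat1; rw [haz]; field_simp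
    rw [e, abs_div, abs_of_pos ht, Real.rpow_sub_one ht.ne']
    calc _ = |heat d a t * (z / 2 - d / 2)| * (1 + z) ^ (d + 1) / t := by ring
      _ ≤ (d + 2) ^ 2 * C * t ^ (-(d : ℝ) / 2) / t := by gcongr
      _ = _ := by ring
  · have h1 := key ((z / 2 - d / 2) ^ 2 - z + d / 2) (by
      rw [abs_le]; constructor <;>
      nlinarith [sq_nonneg z, mul_nonneg hd0 hz0, mul_nonneg (mul_nonneg hd0 hd0) hz0,
        mul_nonneg (mul_nonneg hd0 hd0) (sq_nonneg z), mul_nonneg hd0 (sq_nonneg z), sq_nonneg (d : ℝ),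
        sq_nonneg (z / 2 - d / 2)])
    have e : heat2 d a t = heat d a t * ((z / 2 - d / 2) ^ 2 - z + d / 2) / t ^ 2 := by
      unfold heat2; rw [haz]; field_simp; ring
    rw [e, abs_div, abs_of_pos (pow_pos ht 2), Real.rpow_sub ht, Real.rpow_two]
    calc _ = |heat d a t * ((z / 2 - d / 2) ^ 2 - z + d / 2)| * (1 + z) ^ (d + 1) / t ^ 2 := by
          ring
      _ ≤ (d + 2) ^ 2 * C * t ^ (-(d : ℝ) / 2) / t ^ 2 := by gcongr
      _ = _ := by ring

/-- Spatial decay `r^(-(d+1))` is bought from the factor `(1 + r²/t)^(d+1)` of `heat_bounds` at the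
price of `t^((d+1)/2)`. -/
theorem pow_le_heat_weight (d : ℕ) {r t : ℝ} (hr : 0 ≤ r) (ht : 0 < t) :
    r ^ (d + 1) ≤ t ^ (((d : ℝ) + 1) / 2) * (1 + r ^ 2 / t) ^ (d + 1) := by
  have h1 : r ≤ Real.sqrt t * (1 + r ^ 2 / t) := by
    have hs : 0 < Real.sqrt t := Real.sqrt_pos.2 ht
    have hst : Real.sqrt t ^ 2 = t := Real.sq_sqrt ht.le
    set s := Real.sqrt t
    rw [← hst]
    have : s * (1 + r ^ 2 / s ^ 2) = (s ^ 2 + r ^ 2) / s := by field_simp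
    rw [this, le_div_iff₀ hs]
    nlinarith [sq_nonneg (r - s)]
  have e : t ^ (((d : ℝ) + 1) / 2) = Real.sqrt t ^ (d + 1) := by
    rw [Real.sqrt_eq_rpow, ← Real.rpow_natCast, ← Real.rpow_mul ht.le]
    congr 1; push_cast; ring
  rw [e, ← mul_pow]
  gcongr

theorem summable_nat_add_one_rpow {p : ℝ} (hp : p < -1) :
    Summable (fun n : ℕ => ((n : ℝ) + 1) ^ p) := by
  have := (summable_nat_add_iff 1).2 (Real.summable_nat_rpow.2 hp)
  simpa using this

set_option maxHeartbeats 1000000 in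
/-- Comparison of `∑ g'(n)` with the telescoping `∑ (g(n) - g(n-1))`, where `g` is the heat
kernel as a function of time: the error at `n` is governed by `g''` near `n`, and `r^(d+1) |g''(t)|` is `O(t^(-3/2))`
uniformly in `r`, hence summable over integer times. -/
theorem tsum_heat1_bound (d : ℕ) (hd : 5 ≤ d) : ∃ C : ℝ, 0 ≤ C ∧ ∀ r : ℝ, 0 ≤ r →
    |∑' n : ℕ, heat1 d (r ^ 2) ((n : ℝ) + 1)| * (1 + r) ^ (d + 1) ≤ C := by
  obtain ⟨C, hC, hb⟩ := heat_bounds d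
  have hd' : (5 : ℝ) ≤ d := by exact_mod_cast hd
  set S : ℝ := ∑' n : ℕ, ((n : ℝ) + 1) ^ (-(3 / 2) : ℝ) with hS
  have hSs := summable_nat_add_one_rpow (p := -(3 / 2)) (by norm_num)
  have hS0 : 0 ≤ S := tsum_nonneg fun n => by positivity
  refine ⟨2 ^ (d + 1) * (C * S + (C * S + 2 * C)), by positivity, fun r hr => ?_⟩
  set g : ℝ → ℝ := heat d (r ^ 2) with hg
  have hone : ∀ t : ℝ, 0 < t → 1 ≤ (1 + r ^ 2 / t) ^ (d + 1) := fun t ht =>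
    one_le_pow₀ (by have : 0 ≤ r ^ 2 / t := by positivity
                    linarith)
  have hdrop : ∀ (w t B : ℝ), 0 < t → |w| * (1 + r ^ 2 / t) ^ (d + 1) ≤ B → |w| ≤ B :=
    fun w t B ht h => le_trans (le_mul_of_one_le_right (abs_nonneg _) (hone t ht)) h
  have hn : ∀ n : ℕ, (0 : ℝ) < (n : ℝ) + 1 := fun n => by positivity
  have hn1 : ∀ n : ℕ, (1 : ℝ) ≤ (n : ℝ) + 1 := fun n => by
    have : (0 : ℝ) ≤ n := by positivity
    linarith
  have b0 : ∀ n : ℕ, |g ((n : ℝ) + 1)| ≤ C * ((n : ℝ) + 1) ^ (-(3 / 2) : ℝ) := fun n => by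
    refine (hdrop _ _ _ (hn n) (hb _ _ (sq_nonneg r) (hn n)).1).trans ?_
    gcongr
    · exact hn1 n
    · linarith
  have b1 : ∀ n : ℕ, |heat1 d (r ^ 2) ((n : ℝ) + 1)| ≤ C * ((n : ℝ) + 1) ^ (-(3 / 2) : ℝ) :=
    fun n => by
    refine (hdrop _ _ _ (hn n) (hb _ _ (sq_nonneg r) (hn n)).2.1).trans ?_
    gcongr
    · exact hn1 n
    · linarith
  have sg : Summable (fun n : ℕ => g ((n : ℝ) + 1)) :=
    Summable.of_norm_bounded (f := fun n : ℕ => g ((n : ℝ) + 1)) (hSs.mul_left C) b0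
  have s1 : Summable (fun n : ℕ => heat1 d (r ^ 2) ((n : ℝ) + 1)) :=
    Summable.of_norm_bounded (f := fun n : ℕ => heat1 d (r ^ 2) ((n : ℝ) + 1))
      (hSs.mul_left C) b1
  have sg' : Summable (fun n : ℕ => g (((n + 1 : ℕ) : ℝ) + 1)) := (summable_nat_add_iff 1).2 sg
  have s1' : Summable (fun n : ℕ => heat1 d (r ^ 2) (((n + 1 : ℕ) : ℝ) + 1)) :=
    (summable_nat_add_iff 1).2 s1
  have B1 : |∑' n : ℕ, heat1 d (r ^ 2) ((n : ℝ) + 1)| ≤ C * S := by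
    have := tsum_of_norm_bounded (f := fun n : ℕ => heat1 d (r ^ 2) ((n : ℝ) + 1))
      (hSs.mul_left C).hasSum b1
    rwa [tsum_mul_left] at this
  -- The error `g'(n+2) - (g(n+2) - g(n+1))` equals `g''(η)` times a number in `[0,1]`.
  have err : ∀ n : ℕ, |r ^ (d + 1) * (heat1 d (r ^ 2) (((n + 1 : ℕ) : ℝ) + 1)
      - (g (((n + 1 : ℕ) : ℝ) + 1) - g ((n : ℝ) + 1)))| ≤ C * ((n : ℝ) + 1) ^ (-(3 / 2) : ℝ) := by
    intro n
    have hlt : (n : ℝ) + 1 < ((n + 1 : ℕ) : ℝ) + 1 := by push_cast; linarith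
    obtain ⟨ξ, hξ, eξ⟩ := exists_hasDerivAt_eq_slope g (heat1 d (r ^ 2)) hlt
      (fun t ht => (hasDerivAt_heat d (r ^ 2) (lt_of_lt_of_le (hn n) ht.1)).continuousAt.continuousWithinAt)
      (fun t ht => hasDerivAt_heat d (r ^ 2) ((hn n).trans ht.1))
    have hξ0 : 0 < ξ := (hn n).trans hξ.1
    obtain ⟨η, hη, eη⟩ := exists_hasDerivAt_eq_slope (heat1 d (r ^ 2)) (heat2 d (r ^ 2)) hξ.2
      (fun t ht => (hasDerivAt_heat1 d (r ^ 2) (lt_of_lt_of_le hξ0 ht.1)).continuousAt.continuousWithinAt)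
      (fun t ht => hasDerivAt_heat1 d (r ^ 2) (hξ0.trans ht.1))
    have hη0 : 0 < η := hξ0.trans hη.1
    have e1 : g (((n + 1 : ℕ) : ℝ) + 1) - g ((n : ℝ) + 1) = heat1 d (r ^ 2) ξ := by
      rw [eξ]; push_cast; field_simp; ring
    have hpos : 0 < ((n + 1 : ℕ) : ℝ) + 1 - ξ := sub_pos.2 hξ.2
    have hle1 : ((n + 1 : ℕ) : ℝ) + 1 - ξ ≤ 1 := by
      have := hξ.1; push_cast; linarith
    rw [eq_div_iff hpos.ne'] at eη
    rw [e1, ← eη, abs_mul, abs_mul, abs_of_pos hpos, abs_of_nonneg (by positivity : 0 ≤ r ^ (d + 1))]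
    calc r ^ (d + 1) * (|heat2 d (r ^ 2) η| * (((n + 1 : ℕ) : ℝ) + 1 - ξ))
        ≤ (η ^ (((d : ℝ) + 1) / 2) * (1 + r ^ 2 / η) ^ (d + 1)) * (|heat2 d (r ^ 2) η| * 1) := by
          gcongr
          exact pow_le_heat_weight d hr hη0
      _ = η ^ (((d : ℝ) + 1) / 2) * (|heat2 d (r ^ 2) η| * (1 + r ^ 2 / η) ^ (d + 1)) := by ring
      _ ≤ η ^ (((d : ℝ) + 1) / 2) * (C * η ^ (-(d : ℝ) / 2 - 2)) := by
          exact mul_le_mul_of_nonneg_left (hb _ _ (sq_nonneg r) hη0).2.2 (by positivity)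
      _ = C * η ^ (-(3 / 2) : ℝ) := by
          rw [mul_left_comm, ← Real.rpow_add hη0]; congr 2; ring
      _ ≤ C * ((n : ℝ) + 1) ^ (-(3 / 2) : ℝ) := by
          gcongr ?_ * ?_
          exact Real.rpow_le_rpow_of_nonpos (hn n) (hξ.1.trans hη.1).le (by norm_num)
  have B2 : |∑' n : ℕ, heat1 d (r ^ 2) ((n : ℝ) + 1)| * r ^ (d + 1) ≤ C * S + 2 * C := by
    have E := tsum_of_norm_bounded (f := fun n : ℕ =>
      r ^ (d + 1) * (heat1 d (r ^ 2) (((n + 1 : ℕ) : ℝ) + 1)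
        - (g (((n + 1 : ℕ) : ℝ) + 1) - g ((n : ℝ) + 1)))) (hSs.mul_left C).hasSum err
    rw [tsum_mul_left, tsum_mul_left, Summable.tsum_sub s1' (sg'.sub sg),
      Summable.tsum_sub sg' sg] at E
    have t1 := s1.tsum_eq_zero_add
    have t2 := sg.tsum_eq_zero_add
    simp only [Nat.cast_zero, zero_add] at t1 t2
    have w := pow_le_heat_weight d hr one_pos
    have c0 := (hb _ _ (sq_nonneg r) one_pos).1
    have c1 := (hb _ _ (sq_nonneg r) one_pos).2.1
    simp only [Real.one_rpow, one_mul, mul_one] at w c0 c1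
    have c0' : |g 1| * r ^ (d + 1) ≤ C := (mul_le_mul_of_nonneg_left w (abs_nonneg _)).trans c0
    have c1' : |heat1 d (r ^ 2) 1| * r ^ (d + 1) ≤ C :=
      (mul_le_mul_of_nonneg_left w (abs_nonneg _)).trans c1
    have hrp : (0 : ℝ) ≤ r ^ (d + 1) := by positivity
    have hRabs : |r ^ (d + 1)| = r ^ (d + 1) := abs_of_nonneg hrp
    rw [t1]
    rw [t2, Real.norm_eq_abs] at E
    generalize (∑' n : ℕ, heat1 d (r ^ 2) (((n + 1 : ℕ) : ℝ) + 1)) = A at E ⊢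
    generalize (∑' n : ℕ, g (((n + 1 : ℕ) : ℝ) + 1)) = Gs at E
    generalize r ^ (d + 1) = R at *
    rw [show A - (Gs - (g 1 + Gs)) = A + g 1 by ring, abs_mul, hRabs] at E
    have tri : |heat1 d (r ^ 2) 1 + A| ≤ |heat1 d (r ^ 2) 1| + |g 1| + |A + g 1| := by
      have := abs_add_three (heat1 d (r ^ 2) 1) (-g 1) (A + g 1)
      rw [abs_neg] at this
      rwa [show heat1 d (r ^ 2) 1 + -g 1 + (A + g 1) = heat1 d (r ^ 2) 1 + A by ring] at this
    calc _ ≤ (|heat1 d (r ^ 2) 1| + |g 1| + |A + g 1|) * R := by gcongr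
      _ = |heat1 d (r ^ 2) 1| * R + |g 1| * R + R * |A + g 1| := by ring
      _ ≤ C + C + C * S := by gcongr
      _ = _ := by ring
  have hpow : (1 + r) ^ (d + 1) ≤ 2 ^ (d + 1) * (1 + r ^ (d + 1)) := by
    have hrp : (0 : ℝ) ≤ r ^ (d + 1) := by positivity
    rcases le_total r 1 with h | h
    · calc (1 + r) ^ (d + 1) ≤ (2 : ℝ) ^ (d + 1) := by gcongr; linarith
        _ ≤ _ := le_mul_of_one_le_right (by positivity) (by linarith)
    · calc (1 + r) ^ (d + 1) ≤ (2 * r) ^ (d + 1) := by gcongr; linarith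
        _ = 2 ^ (d + 1) * r ^ (d + 1) := mul_pow _ _ _
        _ ≤ _ := by gcongr; linarith
  calc _ ≤ |∑' n : ℕ, heat1 d (r ^ 2) ((n : ℝ) + 1)| * (2 ^ (d + 1) * (1 + r ^ (d + 1))) := by
        gcongr
    _ = 2 ^ (d + 1) * (|∑' n : ℕ, heat1 d (r ^ 2) ((n : ℝ) + 1)|
        + |∑' n : ℕ, heat1 d (r ^ 2) ((n : ℝ) + 1)| * r ^ (d + 1)) := by ring
    _ ≤ _ := by gcongr

/-! ### The weight and convolution -/

/-- The weight `(1+|x|)^{-(d+1)}`, integrable on `ℝ^d`. -/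
noncomputable def wt (d : ℕ) (x : EuclideanSpace ℝ (Fin d)) : ℝ :=
  (1 + ‖x‖) ^ (-((d : ℝ) + 1))

theorem wt_eq (d : ℕ) (x : EuclideanSpace ℝ (Fin d)) : wt d x = ((1 + ‖x‖) ^ (d + 1))⁻¹ := by
  unfold wt
  rw [Real.rpow_neg (by positivity)]
  congr 1
  exact_mod_cast Real.rpow_natCast (1 + ‖x‖) (d + 1)

theorem wt_pos (d : ℕ) (x : EuclideanSpace ℝ (Fin d)) : 0 < wt d x := by
  unfold wt; positivity

theorem integrable_wt (d : ℕ) : Integrable (wt d) := by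
  unfold wt
  exact integrable_one_add_norm (by simp)

/-- One of `y`, `x - y` has norm at least `|x|/2`, so its weight is comparable to that of `x`. -/
theorem wt_mul_wt_le (d : ℕ) (x y : EuclideanSpace ℝ (Fin d)) :
    wt d y * wt d (x - y) ≤ 2 ^ (d + 1) * wt d x * (wt d y + wt d (x - y)) := by
  have key : ∀ u v : EuclideanSpace ℝ (Fin d), ‖x‖ ≤ ‖u‖ + ‖v‖ → ‖v‖ ≤ ‖u‖ →
      wt d u ≤ 2 ^ (d + 1) * wt d x := by
    intro u v h1 h2
    rw [wt_eq, wt_eq, ← div_eq_mul_inv, inv_eq_one_div, div_le_div_iff₀ (by positivity)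
      (by positivity), one_mul, ← mul_pow]
    gcongr
    linarith
  have h : ‖x‖ ≤ ‖y‖ + ‖x - y‖ := by
    have := norm_add_le y (x - y)
    rwa [add_sub_cancel] at this
  have p1 := wt_pos d x
  have p2 := wt_pos d y
  have p3 := wt_pos d (x - y)
  rcases le_total ‖y‖ ‖x - y‖ with h' | h'
  · have := key (x - y) y (by linarith) h'
    calc wt d y * wt d (x - y) ≤ wt d y * (2 ^ (d + 1) * wt d x) := by gcongr
      _ = 2 ^ (d + 1) * wt d x * wt d y := by ring
      _ ≤ _ := by gcongr; linarith
  · have := key y (x - y) h h'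
    calc wt d y * wt d (x - y) ≤ (2 ^ (d + 1) * wt d x) * wt d (x - y) := by gcongr
      _ ≤ _ := by gcongr; linarith

/-- Convolution preserves the decay rate `wt d`. -/
theorem conv_wt_bound (d : ℕ) : ∃ K : ℝ, 0 ≤ K ∧
    ∀ (W H : EuclideanSpace ℝ (Fin d) → ℝ) (A B : ℝ), 0 ≤ A → 0 ≤ B →
      (∀ y, |W y| ≤ A * wt d y) → (∀ y, |H y| ≤ B * wt d y) →
      ∀ x, |∫ y, W y * H (x - y)| ≤ A * B * K * wt d x := by
  refine ⟨2 ^ (d + 1) * (2 * ∫ y, wt d y), ?_, ?_⟩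
  · have : 0 ≤ ∫ y, wt d y := integral_nonneg fun y => (wt_pos d y).le
    positivity
  intro W H A B hA hB hW hH x
  have hi := integrable_wt d
  have hi' : Integrable (fun y => wt d (x - y)) := hi.comp_sub_left x
  have := norm_integral_le_of_norm_le (f := fun y => W y * H (x - y))
    ((hi.add hi').const_mul (A * B * (2 ^ (d + 1) * wt d x))) (Filter.Eventually.of_forall fun y => by
      rw [Real.norm_eq_abs, abs_mul]
      calc |W y| * |H (x - y)| ≤ (A * wt d y) * (B * wt d (x - y)) := by
            gcongr
            · exact mul_nonneg hA (wt_pos d y).le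
            · exact hW y
            · exact hH _
        _ = A * B * (wt d y * wt d (x - y)) := by ring
        _ ≤ A * B * (2 ^ (d + 1) * wt d x * (wt d y + wt d (x - y))) := by
            exact mul_le_mul_of_nonneg_left (wt_mul_wt_le d x y) (mul_nonneg hA hB)
        _ = _ := by simp only [Pi.add_apply]; ring)
  rw [Real.norm_eq_abs, integral_const_mul] at this
  refine this.trans (le_of_eq ?_)
  simp only [Pi.add_apply]
  rw [integral_add hi hi', integral_sub_left_eq_self (wt d) volume x]
  ring

theorem Bnorm_le_of_wt (d : ℕ) (f : EuclideanSpace ℝ (Fin d) → ℝ) (C : ℝ) (hC : 0 ≤ C)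
    (h : ∀ x, |f x| ≤ C * wt d x) :
    Bnorm d f ≤ ENNReal.ofReal (C * (∫ y, wt d y) + C) := by
  have hI : 0 ≤ ∫ y, wt d y := integral_nonneg fun y => (wt_pos d y).le
  have hw : ∀ x, ‖x‖ ^ d * wt d x ≤ 1 ∧ wt d x ≤ 1 := by
    intro x
    have h1 : 1 ≤ 1 + ‖x‖ := by linarith [norm_nonneg x]
    rw [wt_eq]
    refine ⟨?_, inv_le_one_of_one_le₀ (one_le_pow₀ h1)⟩
    rw [← div_eq_mul_inv, div_le_one (by positivity)]
    calc ‖x‖ ^ d ≤ (1 + ‖x‖) ^ d := by gcongr; linarith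
      _ ≤ (1 + ‖x‖) ^ (d + 1) := pow_le_pow_right₀ h1 (by omega)
  unfold Bnorm
  refine max_le ?_ (max_le (iSup_le fun x => ?_) (iSup_le fun x => ?_))
  · calc (∫⁻ x, ENNReal.ofReal |f x|) ≤ ∫⁻ x, ENNReal.ofReal (C * wt d x) :=
          lintegral_mono fun x => ENNReal.ofReal_le_ofReal (h x)
      _ = ENNReal.ofReal (∫ x, C * wt d x) :=
          (ofReal_integral_eq_lintegral_ofReal ((integrable_wt d).const_mul C)
            (Filter.Eventually.of_forall fun x => mul_nonneg hC (wt_pos d x).le)).symm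
      _ ≤ _ := by
          rw [integral_const_mul]
          exact ENNReal.ofReal_le_ofReal (by linarith)
  · refine ENNReal.ofReal_le_ofReal ((h x).trans ?_)
    have := mul_le_mul_of_nonneg_left (hw x).2 hC
    have := mul_nonneg hC hI
    linarith
  · refine ENNReal.ofReal_le_ofReal ?_
    calc ‖x‖ ^ d * |f x| ≤ ‖x‖ ^ d * (C * wt d x) := by gcongr; exact h x
      _ = C * (‖x‖ ^ d * wt d x) := by ring
      _ ≤ C * 1 := by gcongr; exact (hw x).1
      _ ≤ _ := by have := mul_nonneg hC hI; linarith

/-! ### Spatial derivatives of the Gaussian and integration by parts -/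

theorem gaussK_eq_heat (d : ℕ) (t : ℝ) (x : EuclideanSpace ℝ (Fin d)) :
    gaussK d t x = heat d (‖x‖ ^ 2) t := rfl

theorem continuous_gaussK (d : ℕ) (t : ℝ) : Continuous (gaussK d t) := by
  unfold gaussK; fun_prop

theorem continuous_heat1_sq (d : ℕ) (t : ℝ) :
    Continuous (fun x : EuclideanSpace ℝ (Fin d) => heat1 d (‖x‖ ^ 2) t) := by
  unfold heat1 heat; fun_prop

theorem hasLineDerivAt_gaussK (d : ℕ) (t : ℝ) (x y : EuclideanSpace ℝ (Fin d)) (i : Fin d) :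
    HasLineDerivAt ℝ (fun y => gaussK d t (x - y)) (gaussK d t (x - y) * ((x - y) i / t)) y
      (EuclideanSpace.single i (1 : ℝ)) := by
  have h1 : HasFDerivAt (fun y : EuclideanSpace ℝ (Fin d) => ‖x - y‖ ^ 2)
      (2 • (innerSL ℝ (x - y)).comp (-ContinuousLinearMap.id ℝ _)) y :=
    ((hasFDerivAt_id y).const_sub x).norm_sq
  have h2 : HasDerivAt (fun s : ℝ => heat d s t) (heat d (‖x - y‖ ^ 2) t * (-1 / (2 * t)))
      (‖x - y‖ ^ 2) := by
    have := ((((hasDerivAt_id (‖x - y‖ ^ 2)).neg).div_const (2 * t)).exp).const_mul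
      ((2 * Real.pi * t) ^ (-(d : ℝ) / 2))
    refine this.congr_deriv ?_
    simp only [heat, id, Pi.neg_apply]
    ring
  have h3 := (h2.comp_hasFDerivAt y h1).hasLineDerivAt (EuclideanSpace.single i (1 : ℝ))
  refine HasDerivAt.congr_deriv h3 ?_
  simp [gaussK_eq_heat, EuclideanSpace.inner_single_right]
  field_simp
  ring

theorem hasLineDerivAt_gaussK2 (d : ℕ) (t : ℝ) (x y : EuclideanSpace ℝ (Fin d)) (i : Fin d) :
    HasLineDerivAt ℝ (fun y => gaussK d t (x - y) * ((x - y) i / t))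
      (gaussK d t (x - y) * ((x - y) i ^ 2 / t ^ 2 - 1 / t)) y
      (EuclideanSpace.single i (1 : ℝ)) := by
  have h1 := hasLineDerivAt_gaussK d t x y i
  have h2 : HasLineDerivAt ℝ (fun y : EuclideanSpace ℝ (Fin d) => (x - y) i / t) (-1 / t) y
      (EuclideanSpace.single i (1 : ℝ)) := by
    unfold HasLineDerivAt
    have : HasDerivAt (fun s : ℝ => (x i - (y i + s)) / t) (-1 / t) 0 := by
      have := (((hasDerivAt_id (0 : ℝ)).const_add (y i)).const_sub (x i)).div_const t
      simpa using this
    simpa using this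
  unfold HasLineDerivAt at h1 h2 ⊢
  refine (h1.mul h2).congr_deriv ?_
  simp only [zero_smul, add_zero]
  ring

/-- For fixed `t` the Gaussian and its first and second partial derivatives are bounded, which
justifies the integrations by parts. -/
theorem gaussK_deriv_bounds (d : ℕ) {t : ℝ} (ht : 0 < t) : ∃ M : ℝ,
    ∀ (z : EuclideanSpace ℝ (Fin d)) (i : Fin d), ‖gaussK d t z‖ ≤ M ∧
      ‖gaussK d t z * (z i / t)‖ ≤ M ∧ ‖gaussK d t z * (z i ^ 2 / t ^ 2 - 1 / t)‖ ≤ M := by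
  obtain ⟨C, hC, hb⟩ := heat_bounds d
  refine ⟨(1 + 1 / t) * (C * t ^ (-(d : ℝ) / 2)), fun z i => ?_⟩
  have h := (hb (‖z‖ ^ 2) t (sq_nonneg _) ht).1
  have hw : 0 ≤ ‖z‖ ^ 2 / t := by positivity
  have h' : |heat d (‖z‖ ^ 2) t| * (1 + ‖z‖ ^ 2 / t) ≤ C * t ^ (-(d : ℝ) / 2) := by
    refine le_trans ?_ h
    gcongr
    exact le_self_pow₀ (by linarith) (by omega)
  have key : ∀ u : ℝ, |u| ≤ (1 + 1 / t) * (1 + ‖z‖ ^ 2 / t) →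
      ‖gaussK d t z * u‖ ≤ (1 + 1 / t) * (C * t ^ (-(d : ℝ) / 2)) := by
    intro u hu
    rw [gaussK_eq_heat, Real.norm_eq_abs, abs_mul]
    calc _ ≤ |heat d (‖z‖ ^ 2) t| * ((1 + 1 / t) * (1 + ‖z‖ ^ 2 / t)) := by gcongr
      _ = (1 + 1 / t) * (|heat d (‖z‖ ^ 2) t| * (1 + ‖z‖ ^ 2 / t)) := by ring
      _ ≤ _ := by gcongr
  have ht' : 0 < 1 / t := by positivity
  have hzi : |z i| ≤ ‖z‖ := by
    have := PiLp.norm_apply_le z i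
    rwa [Real.norm_eq_abs] at this
  have hzi2 : z i ^ 2 ≤ ‖z‖ ^ 2 := sq_le_sq' (by linarith [neg_abs_le (z i), hzi]) (le_trans (le_abs_self _) hzi)
  refine ⟨?_, key _ ?_, key _ ?_⟩
  · have := key 1 (by rw [abs_one]; nlinarith)
    simpa using this
  · rw [abs_div, abs_of_pos ht]
    calc |z i| / t ≤ (1 + ‖z‖ ^ 2) / t := by
          gcongr
          nlinarith [sq_nonneg (‖z‖ - 1), norm_nonneg z]
      _ = 1 / t + ‖z‖ ^ 2 / t := by ring
      _ ≤ _ := by nlinarith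
  · have e : z i ^ 2 / t ^ 2 - 1 / t = (1 / t) * (z i ^ 2 / t - 1) := by field_simp
    rw [e, abs_mul, abs_of_pos ht']
    have h3 : |z i ^ 2 / t - 1| ≤ 1 + ‖z‖ ^ 2 / t := by
      have h4 : z i ^ 2 / t ≤ ‖z‖ ^ 2 / t := by gcongr
      have h5 : 0 ≤ z i ^ 2 / t := by positivity
      rw [abs_le]; constructor <;> linarith
    gcongr
    linarith

/-- The heat equation `Δφ_t = 2 ∂_t φ_t`. -/
theorem sum_gaussK_deriv2 (d : ℕ) {t : ℝ} (ht : 0 < t) (z : EuclideanSpace ℝ (Fin d)) :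
    ∑ i, gaussK d t z * (z i ^ 2 / t ^ 2 - 1 / t) = 2 * heat1 d (‖z‖ ^ 2) t := by
  rw [← Finset.mul_sum, Finset.sum_sub_distrib, ← Finset.sum_div, ← EuclideanSpace.real_norm_sq_eq]
  simp only [Finset.sum_const, Finset.card_univ, Fintype.card_fin, nsmul_eq_mul]
  rw [gaussK_eq_heat, heat1]
  field_simp

/-- If `ρ = ΔW` with `∇W = k(y) y`, two integrations by parts move the Laplacian to the heat
kernel, where it becomes twice the time derivative. -/
theorem conv_gaussK_eq (d : ℕ) {t : ℝ} (ht : 0 < t)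
    (ρ W k : EuclideanSpace ℝ (Fin d) → ℝ) (D : Fin d → EuclideanSpace ℝ (Fin d) → ℝ)
    (hW : ∀ x i, HasLineDerivAt ℝ W (k x * x i) x (EuclideanSpace.single i (1 : ℝ)))
    (hF : ∀ x i, HasLineDerivAt ℝ (fun y : EuclideanSpace ℝ (Fin d) => k y * y i) (D i x) x
      (EuclideanSpace.single i (1 : ℝ)))
    (hD : ∀ x, ∑ i, D i x = ρ x)
    (iW : Integrable W) (iF : ∀ i, Integrable (fun y => k y * y i)) (iD : ∀ i, Integrable (D i))
    (x : EuclideanSpace ℝ (Fin d)) :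
    ∫ y, ρ y * gaussK d t (x - y) = ∫ y, W y * (2 * heat1 d (‖x - y‖ ^ 2) t) := by
  obtain ⟨M, hM⟩ := gaussK_deriv_bounds d ht
  have c0 : Continuous (fun y => gaussK d t (x - y)) :=
    (continuous_gaussK d t).comp (continuous_const.sub continuous_id)
  have c1 : ∀ i, Continuous (fun y : EuclideanSpace ℝ (Fin d) =>
      gaussK d t (x - y) * ((x - y) i / t)) := fun i => c0.mul (by fun_prop)
  have c2 : ∀ i, Continuous (fun y : EuclideanSpace ℝ (Fin d) =>
      gaussK d t (x - y) * ((x - y) i ^ 2 / t ^ 2 - 1 / t)) := fun i => c0.mul (by fun_prop)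
  have m0 : ∀ (i : Fin d) {u : EuclideanSpace ℝ (Fin d) → ℝ}, Integrable u →
      Integrable (fun y => u y * gaussK d t (x - y)) := fun i u hu =>
    hu.mul_bdd c0.aestronglyMeasurable (Filter.Eventually.of_forall fun y => (hM (x - y) i).1)
  have m1 : ∀ (i : Fin d) {u : EuclideanSpace ℝ (Fin d) → ℝ}, Integrable u →
      Integrable (fun y => u y * (gaussK d t (x - y) * ((x - y) i / t))) := fun i u hu =>
    hu.mul_bdd (c1 i).aestronglyMeasurable
      (Filter.Eventually.of_forall fun y => (hM (x - y) i).2.1)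
  have m2 : ∀ (i : Fin d) {u : EuclideanSpace ℝ (Fin d) → ℝ}, Integrable u →
      Integrable (fun y => u y * (gaussK d t (x - y) * ((x - y) i ^ 2 / t ^ 2 - 1 / t))) :=
    fun i u hu => hu.mul_bdd (c2 i).aestronglyMeasurable
      (Filter.Eventually.of_forall fun y => (hM (x - y) i).2.2)
  have step1 : ∀ i, ∫ y, (k y * y i) * (gaussK d t (x - y) * ((x - y) i / t))
      = -∫ y, D i y * gaussK d t (x - y) := fun i =>
    integral_bilinear_hasLineDerivAt_right_eq_neg_left_of_integrable
      (B := ContinuousLinearMap.mul ℝ ℝ) (m0 i (iD i)) (m1 i (iF i)) (m0 i (iF i))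
      (fun y _ => hF y i) (fun y _ => hasLineDerivAt_gaussK d t x y i)
  have step2 : ∀ i, ∫ y, W y * (gaussK d t (x - y) * ((x - y) i ^ 2 / t ^ 2 - 1 / t))
      = -∫ y, (k y * y i) * (gaussK d t (x - y) * ((x - y) i / t)) := fun i =>
    integral_bilinear_hasLineDerivAt_right_eq_neg_left_of_integrable
      (B := ContinuousLinearMap.mul ℝ ℝ) (m1 i (iF i)) (m2 i iW) (m1 i iW)
      (fun y _ => hW y i) (fun y _ => hasLineDerivAt_gaussK2 d t x y i)
  calc ∫ y, ρ y * gaussK d t (x - y) = ∫ y, ∑ i, D i y * gaussK d t (x - y) := by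
        refine integral_congr_ae (Filter.Eventually.of_forall fun y => ?_)
        simp only [← hD, Finset.sum_mul]
    _ = ∑ i, ∫ y, D i y * gaussK d t (x - y) := integral_finsetSum _ fun i _ => m0 i (iD i)
    _ = ∑ i, ∫ y, W y * (gaussK d t (x - y) * ((x - y) i ^ 2 / t ^ 2 - 1 / t)) :=
        Finset.sum_congr rfl fun i _ => by rw [step2, step1, neg_neg]
    _ = ∫ y, ∑ i, W y * (gaussK d t (x - y) * ((x - y) i ^ 2 / t ^ 2 - 1 / t)) :=
        (integral_finsetSum _ fun i _ => m2 i iW).symm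
    _ = _ := by
        refine integral_congr_ae (Filter.Eventually.of_forall fun y => ?_)
        simp only [← Finset.mul_sum]
        rw [Finset.mul_sum, sum_gaussK_deriv2 d ht]

/-- Termwise integration of a uniformly summable series of kernels. -/
theorem integral_mul_tsum (d : ℕ) (ρ : EuclideanSpace ℝ (Fin d) → ℝ) (hρ : Integrable ρ)
    (K : ℕ → EuclideanSpace ℝ (Fin d) → ℝ) (hK : ∀ n, Continuous (K n)) (b : ℕ → ℝ)
    (hb : Summable b) (hKb : ∀ n z, |K n z| ≤ b n) (x : EuclideanSpace ℝ (Fin d)) :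
    ∫ y, ρ y * ∑' n, K n (x - y) = ∑' n, ∫ y, ρ y * K n (x - y) := by
  have hint : ∀ n, Integrable (fun y => ρ y * K n (x - y)) := fun n =>
    hρ.mul_bdd ((hK n).comp (continuous_const.sub continuous_id)).aestronglyMeasurable
      (Filter.Eventually.of_forall fun y => hKb n _)
  rw [integral_tsum_of_summable_integral_norm hint]
  · simp only [tsum_mul_left]
  · refine Summable.of_nonneg_of_le (fun n => integral_nonneg fun y => norm_nonneg _)
      (fun n => ?_) (hb.mul_left (∫ y, ‖ρ y‖))
    rw [← integral_mul_const]
    refine integral_mono (hint n).norm (hρ.norm.mul_const _) fun y => ?_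
    simp only [norm_mul]
    gcongr
    exact hKb n _

/-! ### Decay of the radial profile -/

theorem tail_one_add_rpow {a u : ℝ} (ha : 1 < a) (hu : 0 ≤ u) :
    IntegrableOn (fun t : ℝ => (1 + t) ^ (-a)) (Set.Ioi u) ∧
      ∫ t in Set.Ioi u, (1 + t) ^ (-a) = (1 + u) ^ (1 - a) / (a - 1) := by
  have ha' : a - 1 ≠ 0 := by linarith
  have hder : ∀ t ∈ Set.Ici u, HasDerivAt (fun t : ℝ => -((1 + t) ^ (1 - a) / (a - 1)))
      ((1 + t) ^ (-a)) t := by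
    intro t ht
    have ht0 : 0 < 1 + t := by have : u ≤ t := ht; linarith
    have := ((((hasDerivAt_id t).const_add 1).rpow_const (p := 1 - a)
      (Or.inl ht0.ne')).div_const (a - 1)).neg
    refine this.congr_deriv ?_
    rw [show 1 - a - 1 = -a by ring]
    simp only [id]
    field_simp
    ring
  have hpos : ∀ t ∈ Set.Ioi u, 0 ≤ (1 + t) ^ (-a) := by
    intro t ht
    have ht0 : 0 < 1 + t := by have : u < t := ht; linarith
    positivity
  have hlim : Filter.Tendsto (fun t : ℝ => -((1 + t) ^ (1 - a) / (a - 1))) Filter.atTop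
      (nhds 0) := by
    have h1 := (tendsto_rpow_neg_atTop (y := a - 1) (by linarith)).comp
      (Filter.tendsto_atTop_add_const_left Filter.atTop (1 : ℝ) Filter.tendsto_id)
    have h2 := (h1.div_const (a - 1)).neg
    simpa [Function.comp_def] using h2
  refine ⟨integrableOn_Ioi_deriv_of_nonneg' hder hpos hlim, ?_⟩
  rw [integral_Ioi_of_hasDerivAt_of_nonneg' hder hpos hlim]
  ring

/-- The primitive of `κ` that vanishes at infinity inherits the decay of `κ`, with one power
less. -/
theorem primitive_bound {κ : ℝ → ℝ} (hκ : Continuous κ) {A a : ℝ} (ha : 1 < a)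
    (hb : ∀ t, 0 ≤ t → |κ t| ≤ A * (1 + t) ^ (-a)) {u : ℝ} (hu : 0 ≤ u) :
    |(∫ t in (0 : ℝ)..u, κ t) - ∫ t in Set.Ioi (0 : ℝ), κ t| ≤
      A * ((1 + u) ^ (1 - a) / (a - 1)) := by
  have hi : ∀ v : ℝ, 0 ≤ v → IntegrableOn κ (Set.Ioi v) := fun v hv => by
    refine Integrable.mono' ((tail_one_add_rpow ha hv).1.const_mul A) hκ.aestronglyMeasurable ?_
    filter_upwards [ae_restrict_mem measurableSet_Ioi] with t ht
    exact hb t (hv.trans (le_of_lt ht))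
  have e : (∫ t in (0 : ℝ)..u, κ t) - ∫ t in Set.Ioi (0 : ℝ), κ t
      = -∫ t in Set.Ioi u, κ t := by
    rw [← intervalIntegral.integral_interval_add_Ioi (hi 0 le_rfl) (hi u hu)]
    ring
  rw [e, abs_neg, ← (tail_one_add_rpow ha hu).2, ← integral_const_mul]
  refine norm_integral_le_of_norm_le (f := κ) ((tail_one_add_rpow ha hu).1.const_mul A) ?_
  filter_upwards [ae_restrict_mem measurableSet_Ioi] with t ht
  exact hb t (hu.trans (le_of_lt ht))

/-- The radial profile `k(r) = r^{-d} ∫_0^r p(s) s^{d-1} ds` of the field `k(|x|) x` whose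
divergence is `p(|x|)`, written so that it makes sense, and is continuous, at `r = 0`. -/
noncomputable def prof (d : ℕ) (p : ℝ → ℝ) (r : ℝ) : ℝ :=
  ∫ s in (0 : ℝ)..1, p (r * s) * s ^ (d - 1)

theorem continuous_prof (d : ℕ) {p : ℝ → ℝ} (hp : Continuous p) : Continuous (prof d p) := by
  unfold prof
  exact intervalIntegral.continuous_parametric_intervalIntegral_of_continuous' (by fun_prop) 0 1

theorem pow_mul_prof {d : ℕ} (hd : 1 ≤ d) (p : ℝ → ℝ) (r : ℝ) :
    r ^ d * prof d p r = ∫ s in (0 : ℝ)..r, p s * s ^ (d - 1) := by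
  have h := intervalIntegral.mul_integral_comp_mul_left (a := 0) (b := 1)
    (f := fun s : ℝ => p s * s ^ (d - 1)) r
  simp only [mul_zero, mul_one] at h
  rw [← h, prof, ← intervalIntegral.integral_const_mul, ← intervalIntegral.integral_const_mul]
  refine intervalIntegral.integral_congr fun s _ => ?_
  obtain ⟨n, rfl⟩ : ∃ n, d = n + 1 := ⟨d - 1, by omega⟩
  simp only [Nat.add_sub_cancel]
  ring

theorem prof_zero {d : ℕ} (hd : 1 ≤ d) (p : ℝ → ℝ) : d * prof d p 0 = p 0 := by
  unfold prof
  obtain ⟨n, rfl⟩ : ∃ n, d = n + 1 := ⟨d - 1, by omega⟩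
  simp only [zero_mul, intervalIntegral.integral_const_mul, Nat.add_sub_cancel, integral_pow]
  have : ((n : ℝ) + 1) ≠ 0 := by positivity
  push_cast
  field_simp
  simp

theorem hasDerivAt_prof {d : ℕ} (hd : 1 ≤ d) {p : ℝ → ℝ} (hp : Continuous p) {r : ℝ}
    (hr : 0 < r) : HasDerivAt (prof d p) ((p r - d * prof d p r) / r) r := by
  have h1 : HasDerivAt (fun r : ℝ => ∫ s in (0 : ℝ)..r, p s * s ^ (d - 1)) (p r * r ^ (d - 1)) r :=
    ((by fun_prop : Continuous fun s : ℝ => p s * s ^ (d - 1)).integral_hasStrictDerivAt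
      0 r).hasDerivAt
  have h2 := h1.div (hasDerivAt_pow d r) (by positivity)
  refine (h2.congr_of_eventuallyEq ?_).congr_deriv ?_
  · filter_upwards [lt_mem_nhds hr] with s hs
    simp only [Pi.div_apply]
    rw [← pow_mul_prof hd]
    field_simp
  · simp only [← pow_mul_prof hd]
    obtain ⟨n, rfl⟩ : ∃ n, d = n + 1 := ⟨d - 1, by omega⟩
    simp only [Nat.add_sub_cancel]
    field_simp
    ring

/-- For `r ≥ 1` the mean-zero condition replaces the integral over `[0, r]` in the profile by the
one over `[r, ∞)`, which is `O(r⁻⁴)`; without it the profile would only be `O(r^(-d))`. -/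
theorem prof_bound {d : ℕ} (hd : 1 ≤ d) {p : ℝ → ℝ} (hp : Continuous p)
    (hb : ∀ r, 0 ≤ r → |p r| ≤ ((1 + r) ^ (d + 4))⁻¹)
    (h0 : ∫ s in Set.Ioi (0 : ℝ), p s * s ^ (d - 1) = 0) {r : ℝ} (hr : 0 ≤ r) :
    |prof d p r| * (1 + r) ^ (d + 4) ≤ 2 ^ (d + 4) := by
  rcases le_total r 1 with h | h
  · have h1 : |prof d p r| ≤ 1 := by
      have := intervalIntegral.norm_integral_le_of_norm_le_const (a := 0) (b := 1) (C := 1)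
        (f := fun s : ℝ => p (r * s) * s ^ (d - 1)) (fun s hs => by
          rw [Set.uIoc_of_le zero_le_one] at hs
          rw [Real.norm_eq_abs, abs_mul]
          have hs0 : 0 ≤ s := hs.1.le
          have e1 : |p (r * s)| ≤ 1 := (hb _ (by positivity)).trans
            (inv_le_one_of_one_le₀ (one_le_pow₀ (by nlinarith)))
          have e2 : |s ^ (d - 1)| ≤ 1 := by
            rw [abs_of_nonneg (by positivity)]
            exact pow_le_one₀ hs0 hs.2
          exact mul_le_one₀ e1 (abs_nonneg _) e2)
      simpa [prof] using this
    calc |prof d p r| * (1 + r) ^ (d + 4) ≤ 1 * 2 ^ (d + 4) := by gcongr; linarith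
      _ = _ := one_mul _
  · have hr0 : 0 < r := by linarith
    have hQ := primitive_bound (κ := fun s : ℝ => p s * s ^ (d - 1)) (by fun_prop)
      (A := 1) (a := 5) (by norm_num) (fun s hs => by
        rw [abs_mul, abs_of_nonneg (by positivity : (0 : ℝ) ≤ s ^ (d - 1)), one_mul,
          Real.rpow_neg (by positivity)]
        have e5 : (1 + s) ^ (5 : ℝ) = (1 + s) ^ 5 := by exact_mod_cast Real.rpow_natCast (1 + s) 5
        rw [e5]
        calc |p s| * s ^ (d - 1) ≤ ((1 + s) ^ (d + 4))⁻¹ * (1 + s) ^ (d - 1) := by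
              gcongr
              · exact hb s hs
              · linarith
          _ = ((1 + s) ^ 5)⁻¹ := by
              obtain ⟨n, rfl⟩ : ∃ n, d = n + 1 := ⟨d - 1, by omega⟩
              have : (0 : ℝ) < 1 + s := by linarith
              simp only [Nat.add_sub_cancel]
              rw [show n + 1 + 4 = 5 + n by ring, pow_add]
              field_simp) hr
    rw [h0, sub_zero, ← pow_mul_prof hd, abs_mul, abs_of_nonneg (by positivity : 0 ≤ r ^ d)] at hQ
    have e4 : (1 + r) ^ (1 - 5 : ℝ) = ((1 + r) ^ 4)⁻¹ := by
      rw [show (1 - 5 : ℝ) = -(4 : ℕ) by norm_num, Real.rpow_neg (by positivity),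
        Real.rpow_natCast]
    rw [e4] at hQ
    have hQ' : r ^ d * |prof d p r| * (1 + r) ^ 4 ≤ 1 := by
      have h4 : (0 : ℝ) < (1 + r) ^ 4 := by positivity
      calc _ ≤ 1 * (((1 + r) ^ 4)⁻¹ / (5 - 1)) * (1 + r) ^ 4 := by gcongr
        _ = 1 / 4 := by field_simp; norm_num
        _ ≤ 1 := by norm_num
    calc |prof d p r| * (1 + r) ^ (d + 4) = |prof d p r| * ((1 + r) ^ d * (1 + r) ^ 4) := by
          rw [pow_add]
      _ ≤ |prof d p r| * ((2 * r) ^ d * (1 + r) ^ 4) := by gcongr; linarith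
      _ = 2 ^ d * (r ^ d * |prof d p r| * (1 + r) ^ 4) := by rw [mul_pow]; ring
      _ ≤ 2 ^ d * 1 := by gcongr
      _ ≤ 2 ^ (d + 4) := by rw [mul_one]; exact pow_le_pow_right₀ (by norm_num) (by omega)

theorem sqrt_weight (d : ℕ) {t : ℝ} (ht : 0 ≤ t) :
    ((1 + Real.sqrt t) ^ (d + 4))⁻¹ ≤ (1 + t) ^ (-(((d : ℝ) + 4) / 2)) := by
  rw [Real.rpow_neg (by positivity)]
  gcongr
  have h : 1 + t ≤ (1 + Real.sqrt t) ^ 2 := by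
    nlinarith [Real.sq_sqrt ht, Real.sqrt_nonneg t]
  calc (1 + t) ^ (((d : ℝ) + 4) / 2) ≤ ((1 + Real.sqrt t) ^ 2) ^ (((d : ℝ) + 4) / 2) := by gcongr
    _ = (1 + Real.sqrt t) ^ (d + 4) := by
      rw [← Real.rpow_natCast, ← Real.rpow_natCast, ← Real.rpow_mul (by positivity)]
      congr 1; push_cast; ring

theorem sq_weight (d : ℕ) {r : ℝ} (hr : 0 ≤ r) :
    (1 + r ^ 2) ^ (1 - ((d : ℝ) + 4) / 2) ≤ 2 ^ (d + 2) * ((1 + r) ^ (d + 1))⁻¹ := by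
  rw [show 1 - ((d : ℝ) + 4) / 2 = -(((d : ℝ) + 2) / 2) by ring, Real.rpow_neg (by positivity),
    ← div_eq_mul_inv, inv_eq_one_div, div_le_div_iff₀ (by positivity) (by positivity), one_mul]
  have h : ((1 + r) / 2) ^ 2 ≤ 1 + r ^ 2 := by nlinarith [sq_nonneg (r - 1)]
  have h' : ((1 + r) / 2) ^ (d + 2) ≤ (1 + r ^ 2) ^ (((d : ℝ) + 2) / 2) := by
    calc ((1 + r) / 2) ^ (d + 2) = (((1 + r) / 2) ^ 2) ^ (((d : ℝ) + 2) / 2) := by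
          rw [← Real.rpow_natCast, ← Real.rpow_natCast, ← Real.rpow_mul (by positivity)]
          congr 1; push_cast; ring
      _ ≤ _ := by gcongr
  rw [div_pow, div_le_iff₀ (by positivity)] at h'
  calc (1 + r) ^ (d + 1) ≤ (1 + r) ^ (d + 2) := pow_le_pow_right₀ (by linarith) (by omega)
    _ ≤ _ := by linarith

/-! ### The potential of a radial function of mean zero -/

/-- A radial `ρ` of mean zero is the Laplacian of a decaying radial `W`. The gradient of `W` is
`k(x) x`, and `D i` is the derivative of `k(x) x_i` in direction `i`; the constant does not
depend on `ρ`. -/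
theorem exists_potential (d : ℕ) (hd : 5 ≤ d) : ∃ A : ℝ, 0 ≤ A ∧
    ∀ ρ : EuclideanSpace ℝ (Fin d) → ℝ, Continuous ρ → (∀ x y, ‖x‖ = ‖y‖ → ρ x = ρ y) →
      (∀ x, |ρ x| ≤ ((1 + ‖x‖) ^ (d + 4))⁻¹) → (∫ x, ρ x) = 0 →
      ∃ (W k : EuclideanSpace ℝ (Fin d) → ℝ) (D : Fin d → EuclideanSpace ℝ (Fin d) → ℝ),
        (∀ x i, HasLineDerivAt ℝ W (k x * x i) x (EuclideanSpace.single i (1 : ℝ))) ∧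
        (∀ x i, HasLineDerivAt ℝ (fun y : EuclideanSpace ℝ (Fin d) => k y * y i) (D i x) x
          (EuclideanSpace.single i (1 : ℝ))) ∧
        (∀ x, ∑ i, D i x = ρ x) ∧ Integrable W ∧ (∀ i, Integrable (fun y => k y * y i)) ∧
        (∀ i, Integrable (D i)) ∧ ∀ x, |W x| ≤ A * wt d x := by
  refine ⟨2 ^ (d + 4) * 2 ^ (d + 2), by positivity, fun ρ hc hrad hb hmean => ?_⟩
  have hd1 : 1 ≤ d := by omega
  have hdR : (5 : ℝ) ≤ d := by exact_mod_cast hd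
  let i₀ : Fin d := ⟨0, by omega⟩
  set e : EuclideanSpace ℝ (Fin d) := EuclideanSpace.single i₀ (1 : ℝ) with he
  have hen : ‖e‖ = 1 := by simp [he]
  set p : ℝ → ℝ := fun r => ρ (r • e) with hp
  have hpc : Continuous p := by fun_prop
  have hρp : ∀ x, ρ x = p ‖x‖ := fun x => hrad _ _ (by simp [norm_smul, hen])
  have hpb : ∀ r, 0 ≤ r → |p r| ≤ ((1 + r) ^ (d + 4))⁻¹ := fun r hr => by
    have := hb (r • e)
    rwa [norm_smul, hen, mul_one, Real.norm_of_nonneg hr] at this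
  -- Polar coordinates turn the mean-zero condition into a one-dimensional one.
  have h0 : ∫ s in Set.Ioi (0 : ℝ), p s * s ^ (d - 1) = 0 := by
    have : Nontrivial (EuclideanSpace ℝ (Fin d)) := ⟨e, 0, fun h => by simp [h] at hen⟩
    have h1 := integral_fun_norm_addHaar (volume : Measure (EuclideanSpace ℝ (Fin d))) p
    simp only [← hρp, hmean, finrank_euclideanSpace_fin, smul_eq_mul, nsmul_eq_mul] at h1
    have hball : (volume : Measure (EuclideanSpace ℝ (Fin d))).real (Metric.ball 0 1) ≠ 0 :=
      (ENNReal.toReal_pos (Metric.measure_ball_pos volume _ one_pos).ne' measure_ball_lt_top.ne).ne'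
    have h2 := (mul_eq_zero.1 h1.symm).resolve_left (by positivity)
    have h3 := (mul_eq_zero.1 h2).resolve_left hball
    simpa only [mul_comm] using h3
  have hk := continuous_prof d hpc
  have hkb : ∀ r, 0 ≤ r → |prof d p r| ≤ 2 ^ (d + 4) * ((1 + r) ^ (d + 4))⁻¹ := fun r hr => by
    rw [← div_eq_mul_inv, le_div_iff₀ (by positivity)]
    exact prof_bound hd1 hpc hpb h0 hr
  -- `W = V(|x|²)` with `V' = κ`; the variable `|x|²` keeps `W` differentiable at the origin.
  set κ : ℝ → ℝ := fun t => prof d p (Real.sqrt t) / 2 with hκ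
  have hκc : Continuous κ := (hk.comp Real.continuous_sqrt).div_const 2
  have hκb : ∀ t, 0 ≤ t → |κ t| ≤ 2 ^ (d + 4) * (1 + t) ^ (-(((d : ℝ) + 4) / 2)) := fun t ht => by
    have h1 := hkb (Real.sqrt t) (Real.sqrt_nonneg t)
    have h2 := mul_le_mul_of_nonneg_left (sqrt_weight d ht) (by positivity : (0 : ℝ) ≤ 2 ^ (d + 4))
    rw [hκ, abs_div, abs_two]
    have := abs_nonneg (prof d p (Real.sqrt t))
    linarith
  set V : ℝ → ℝ := fun u => (∫ t in (0 : ℝ)..u, κ t) - ∫ t in Set.Ioi (0 : ℝ), κ t with hV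
  have hVd : ∀ u, HasDerivAt V (κ u) u := fun u =>
    (hκc.integral_hasStrictDerivAt 0 u).hasDerivAt.sub_const _
  have hVb : ∀ r, 0 ≤ r → |V (r ^ 2)| ≤ 2 ^ (d + 4) * (2 ^ (d + 2) * ((1 + r) ^ (d + 1))⁻¹) :=
    fun r hr => by
    have h1 := primitive_bound hκc (by linarith) hκb (sq_nonneg r)
    refine h1.trans ?_
    gcongr
    refine le_trans (div_le_self (by positivity) (by linarith)) (sq_weight d hr)
  have hwt : ∀ x : EuclideanSpace ℝ (Fin d), ((1 + ‖x‖) ^ (d + 4))⁻¹ ≤ wt d x := fun x => by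
    rw [wt_eq]
    gcongr
    · linarith [norm_nonneg x]
    · omega
  have hWb : ∀ x : EuclideanSpace ℝ (Fin d), |V (‖x‖ ^ 2)| ≤ 2 ^ (d + 4) * 2 ^ (d + 2) * wt d x :=
    fun x => by
    rw [wt_eq, mul_assoc]
    exact hVb ‖x‖ (norm_nonneg x)
  have hxi : ∀ (x : EuclideanSpace ℝ (Fin d)) i, |x i| ≤ ‖x‖ := fun x i => by
    have := PiLp.norm_apply_le x i
    rwa [Real.norm_eq_abs] at this
  have hkx : Continuous (fun x : EuclideanSpace ℝ (Fin d) => prof d p ‖x‖) :=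
    hk.comp continuous_norm
  have hVc : Continuous V := continuous_iff_continuousAt.2 fun u => (hVd u).continuousAt
  have hsq : ∀ x : EuclideanSpace ℝ (Fin d), HasFDerivAt (fun y : EuclideanSpace ℝ (Fin d) => ‖y‖ ^ 2)
      (2 • (innerSL ℝ x)) x := fun x => (hasStrictFDerivAt_norm_sq x).hasFDerivAt
  refine ⟨fun x => V (‖x‖ ^ 2), fun x => prof d p ‖x‖,
    fun i x => prof d p ‖x‖ + (ρ x - d * prof d p ‖x‖) * (x i ^ 2 / ‖x‖ ^ 2), ?_, ?_, ?_, ?_, ?_, ?_,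
    hWb⟩
  · intro x i
    have h := ((hVd (‖x‖ ^ 2)).comp_hasFDerivAt x (hsq x)).hasLineDerivAt
      (EuclideanSpace.single i (1 : ℝ))
    refine HasDerivAt.congr_deriv h ?_
    simp [hκ, EuclideanSpace.inner_single_right, Real.sqrt_sq (norm_nonneg x)]
    ring
  · intro x i
    -- At the origin the junk value `0 / 0 = 0` makes `D i 0 = k(0)`, the correct derivative.
    rcases eq_or_ne x 0 with rfl | hx
    · unfold HasLineDerivAt
      have hcont : Filter.Tendsto (fun s : ℝ => prof d p ‖s • EuclideanSpace.single i (1 : ℝ)‖)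
          (nhdsWithin 0 {0}ᶜ) (nhds (prof d p 0)) := by
        have : Continuous (fun s : ℝ => prof d p ‖s • EuclideanSpace.single i (1 : ℝ)‖) :=
          hk.comp (by fun_prop)
        have h := this.tendsto 0
        simp only [zero_smul, norm_zero] at h
        exact h.mono_left nhdsWithin_le_nhds
      rw [hasDerivAt_iff_tendsto_slope]
      simp only [norm_zero, ne_eq, OfNat.ofNat_ne_zero, not_false_eq_true, zero_pow, div_zero,
        mul_zero, add_zero, zero_add]
      refine hcont.congr' ?_
      filter_upwards [self_mem_nhdsWithin] with s hs
      have hs0 : s ≠ 0 := hs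
      simp only [slope_def_field]
      simp
      field_simp
    · have hx0 : 0 < ‖x‖ := norm_pos_iff.2 hx
      have hsqrt : HasDerivAt (fun u : ℝ => prof d p (Real.sqrt u))
          ((p ‖x‖ - d * prof d p ‖x‖) / ‖x‖ * (1 / (2 * ‖x‖))) (‖x‖ ^ 2) := by
        have h1 := Real.hasDerivAt_sqrt (x := ‖x‖ ^ 2) (by positivity)
        rw [Real.sqrt_sq hx0.le] at h1
        have h2 := hasDerivAt_prof hd1 hpc hx0
        exact HasDerivAt.comp_of_eq _ h2 h1 (Real.sqrt_sq hx0.le).symm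
      have h3 := (hsqrt.comp_hasFDerivAt x (hsq x)).hasLineDerivAt
        (EuclideanSpace.single i (1 : ℝ))
      have hfun : (fun u : ℝ => prof d p (Real.sqrt u)) ∘
          (fun y : EuclideanSpace ℝ (Fin d) => ‖y‖ ^ 2) = fun y => prof d p ‖y‖ := by
        funext y; simp [Real.sqrt_sq (norm_nonneg y)]
      rw [hfun] at h3
      have h4 : HasLineDerivAt ℝ (fun y : EuclideanSpace ℝ (Fin d) => y i) 1 x
          (EuclideanSpace.single i (1 : ℝ)) := by
        unfold HasLineDerivAt
        have := (hasDerivAt_id (0 : ℝ)).const_add (x i)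
        simpa using this
      unfold HasLineDerivAt at h3 h4 ⊢
      refine (h3.mul h4).congr_deriv ?_
      beta_reduce
      rw [hρp x]
      simp [EuclideanSpace.inner_single_right]
      field_simp
      ring
  · intro x
    rw [Finset.sum_add_distrib, ← Finset.mul_sum, ← Finset.sum_div,
      ← EuclideanSpace.real_norm_sq_eq]
    simp only [Finset.sum_const, Finset.card_univ, Fintype.card_fin, nsmul_eq_mul]
    rcases eq_or_ne x 0 with rfl | hx
    · simp [prof_zero hd1, hρp]
    · have hx0 : 0 < ‖x‖ := norm_pos_iff.2 hx
      rw [div_self (by positivity)]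
      ring
  · exact ((integrable_wt d).const_mul _).mono' (hVc.comp (by fun_prop)).aestronglyMeasurable
      (Filter.Eventually.of_forall hWb)
  · intro i
    refine ((integrable_wt d).const_mul (2 ^ (d + 4))).mono'
      (hkx.mul (by fun_prop)).aestronglyMeasurable (Filter.Eventually.of_forall fun x => ?_)
    rw [Real.norm_eq_abs, abs_mul, wt_eq]
    have hx0 := norm_nonneg x
    calc |prof d p ‖x‖| * |x i| ≤ (2 ^ (d + 4) * ((1 + ‖x‖) ^ (d + 4))⁻¹) * (1 + ‖x‖) ^ 3 := by
          gcongr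
          · exact hkb _ hx0
          · refine (hxi x i).trans (le_trans ?_ (le_self_pow₀ (by linarith) (by norm_num)))
            linarith
      _ = 2 ^ (d + 4) * ((1 + ‖x‖) ^ (d + 1))⁻¹ := by
          rw [show d + 4 = (d + 1) + 3 by ring, pow_add (1 + ‖x‖)]
          field_simp
  · intro i
    refine ((integrable_wt d).const_mul (2 ^ (d + 4) + (1 + d * 2 ^ (d + 4)))).mono'
      ?_ (Filter.Eventually.of_forall fun x => ?_)
    · have h1 := hkx.measurable
      have h2 := hc.measurable
      have h3 : Measurable (fun x : EuclideanSpace ℝ (Fin d) => x i ^ 2 / ‖x‖ ^ 2) :=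
        (by fun_prop : Continuous fun x : EuclideanSpace ℝ (Fin d) => x i ^ 2).measurable.div
          (by fun_prop : Continuous fun x : EuclideanSpace ℝ (Fin d) => ‖x‖ ^ 2).measurable
      exact (h1.add ((h2.sub (h1.const_mul _)).mul h3)).aestronglyMeasurable
    · have hx0 := norm_nonneg x
      have w := hwt x
      have k1 : |prof d p ‖x‖| ≤ 2 ^ (d + 4) * wt d x := (hkb _ hx0).trans (by gcongr)
      have k2 : |ρ x| ≤ wt d x := (hb x).trans w
      have k3 : |x i ^ 2 / ‖x‖ ^ 2| ≤ 1 := by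
        rw [abs_of_nonneg (by positivity)]
        refine div_le_one_of_le₀ ?_ (by positivity)
        rw [← sq_abs]
        exact pow_le_pow_left₀ (abs_nonneg _) (hxi x i) 2
      rw [Real.norm_eq_abs]
      calc _ ≤ |prof d p ‖x‖| + |ρ x - d * prof d p ‖x‖| * |x i ^ 2 / ‖x‖ ^ 2| := by
            rw [← abs_mul]; exact abs_add_le _ _
        _ ≤ |prof d p ‖x‖| + (|ρ x| + d * |prof d p ‖x‖|) * 1 := by
            gcongr
            refine (abs_sub _ _).trans (le_of_eq ?_)
            rw [abs_mul, Nat.abs_cast]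
        _ ≤ 2 ^ (d + 4) * wt d x + (wt d x + d * (2 ^ (d + 4) * wt d x)) * 1 := by gcongr
        _ = _ := by ring

/-! ### The convolution with the Green function -/

theorem stmt8 (d : ℕ) (hd : 5 ≤ d) :
    ∃ C : ℝ, ∀ ρ : EuclideanSpace ℝ (Fin d) → ℝ,
      Continuous ρ →
      (∀ x y, ‖x‖ = ‖y‖ → ρ x = ρ y) →
      (∀ x, |ρ x| ≤ (1 + ‖x‖) ^ (-((d : ℝ) + 4))) →
      (∫ x, ρ x) = 0 →
      Continuous (convol d ρ (Gfun d)) ∧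
        Bnorm d (convol d ρ (Gfun d)) ≤ ENNReal.ofReal C := by
  obtain ⟨A, hA, hpot⟩ := exists_potential d hd
  obtain ⟨B, hB, hheat⟩ := tsum_heat1_bound d hd
  obtain ⟨K, hK, hconv⟩ := conv_wt_bound d
  obtain ⟨C₀, hC₀, hbd⟩ := heat_bounds d
  have hdR : (5 : ℝ) ≤ d := by exact_mod_cast hd
  refine ⟨A * (2 * B) * K * (∫ y, wt d y) + A * (2 * B) * K, fun ρ hc hrad hb hmean => ?_⟩
  have hb' : ∀ x, |ρ x| ≤ ((1 + ‖x‖) ^ (d + 4))⁻¹ := fun x => by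
    refine (hb x).trans (le_of_eq ?_)
    rw [Real.rpow_neg (by positivity)]
    congr 1
    exact_mod_cast Real.rpow_natCast (1 + ‖x‖) (d + 4)
  have hρi : Integrable ρ :=
    (integrable_one_add_norm (r := (d : ℝ) + 4) (by simp)).mono' hc.aestronglyMeasurable
      (Filter.Eventually.of_forall hb)
  -- Uniform summability of the heat kernels at integer times and of their time derivatives.
  have hs := (summable_nat_add_one_rpow (p := -(3 / 2)) (by norm_num)).mul_left C₀
  have hn : ∀ n : ℕ, (0 : ℝ) < (n : ℝ) + 1 := fun n => by positivity
  have hone : ∀ (z : EuclideanSpace ℝ (Fin d)) (n : ℕ),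
      1 ≤ (1 + ‖z‖ ^ 2 / ((n : ℝ) + 1)) ^ (d + 1) := fun z n =>
    one_le_pow₀ (by have : 0 ≤ ‖z‖ ^ 2 / ((n : ℝ) + 1) := by positivity
                    linarith)
  have hexp : ∀ (n : ℕ) (q : ℝ), q ≤ -(3 / 2) →
      C₀ * ((n : ℝ) + 1) ^ q ≤ C₀ * ((n : ℝ) + 1) ^ (-(3 / 2) : ℝ) := fun n q hq =>
    mul_le_mul_of_nonneg_left (Real.rpow_le_rpow_of_exponent_le
      (by have : (0 : ℝ) ≤ n := by positivity
          linarith) hq) hC₀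
  have g0 : ∀ (n : ℕ) (z : EuclideanSpace ℝ (Fin d)),
      |gaussK d ((n : ℝ) + 1) z| ≤ C₀ * ((n : ℝ) + 1) ^ (-(3 / 2) : ℝ) := fun n z =>
    ((le_mul_of_one_le_right (abs_nonneg _) (hone z n)).trans
      (hbd _ _ (sq_nonneg ‖z‖) (hn n)).1).trans (hexp n _ (by linarith))
  have g1 : ∀ (n : ℕ) (z : EuclideanSpace ℝ (Fin d)),
      |2 * heat1 d (‖z‖ ^ 2) ((n : ℝ) + 1)| ≤ 2 * (C₀ * ((n : ℝ) + 1) ^ (-(3 / 2) : ℝ)) :=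
    fun n z => by
    rw [abs_mul, abs_two]
    exact mul_le_mul_of_nonneg_left (((le_mul_of_one_le_right (abs_nonneg _) (hone z n)).trans
      (hbd _ _ (sq_nonneg ‖z‖) (hn n)).2.1).trans (hexp n _ (by linarith))) (by norm_num)
  have hGc : Continuous (Gfun d) :=
    continuous_tsum (fun n => continuous_gaussK d _) hs g0
  have hGb : ∀ z, ‖Gfun d z‖ ≤ ∑' n : ℕ, C₀ * ((n : ℝ) + 1) ^ (-(3 / 2) : ℝ) := fun z =>
    tsum_of_norm_bounded hs.hasSum fun n => g0 n z
  obtain ⟨W, k, D, hW, hF, hD, iW, iF, iD, hWb⟩ := hpot ρ hc hrad hb' hmean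
  constructor
  · refine continuous_of_dominated (F := fun x y => ρ y * Gfun d (x - y))
      (bound := fun y => ‖ρ y‖ * ∑' n : ℕ, C₀ * ((n : ℝ) + 1) ^ (-(3 / 2) : ℝ))
      (fun x => (hc.mul (hGc.comp (by fun_prop))).aestronglyMeasurable)
      (fun x => Filter.Eventually.of_forall fun y => ?_) (hρi.norm.mul_const _)
      (Filter.Eventually.of_forall fun y => continuous_const.mul (hGc.comp (by fun_prop)))
    rw [norm_mul]
    exact mul_le_mul_of_nonneg_left (hGb _) (norm_nonneg _)
  -- `ρ ⋆ G = W ⋆ ΔG`, with `ΔG` the sum of `2 ∂_t φ_t` over integer times.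
  · have hEq : ∀ x, convol d ρ (Gfun d) x =
        ∫ y, W y * ∑' n : ℕ, 2 * heat1 d (‖x - y‖ ^ 2) ((n : ℝ) + 1) := fun x => by
      have e1 := integral_mul_tsum d ρ hρi (fun n z => gaussK d ((n : ℝ) + 1) z)
        (fun n => continuous_gaussK d _) _ hs g0 x
      have e2 := integral_mul_tsum d W iW (fun n z => 2 * heat1 d (‖z‖ ^ 2) ((n : ℝ) + 1))
        (fun n => continuous_const.mul (continuous_heat1_sq d _)) _ (hs.mul_left 2) g1 x
      unfold convol Gfun
      rw [e1, e2]
      exact tsum_congr fun n => conv_gaussK_eq d (hn n) ρ W k D hW hF hD iW iF iD x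
    refine Bnorm_le_of_wt d _ (A * (2 * B) * K) (by positivity) fun x => ?_
    rw [hEq]
    refine hconv W (fun z => ∑' n : ℕ, 2 * heat1 d (‖z‖ ^ 2) ((n : ℝ) + 1)) A (2 * B) hA
      (by positivity) hWb (fun z => ?_) x
    have := hheat ‖z‖ (norm_nonneg z)
    rw [tsum_mul_left, abs_mul, abs_two, mul_assoc, wt_eq, ← div_eq_mul_inv]
    gcongr
    rwa [le_div_iff₀ (by positivity)]
end
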